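/- Let −1 < α < 0 and u ∈ C_0^∞(ℝ³;ℝ³) with spherical-mean decomposition u = ū + v. Setting w(r) = (‖D_r ū‖_ω, ‖Dv‖_ω)ᵀ ∈ ℝ² for r > 0, one has ∫_{ℝ³}(Lu)·(Φu) dx ≥ (1/2)|u(0)|² + c_α ∫_0^∞ r · w(r)ᵀ B₋(α) w(r) dr. -/

import Mathlib

/-!
Write `κ = α/(α+2)`, `ω = x/|x|`, `G = Du`. Integrating by parts, the energy density splits for
`x ≠ 0` as

  `(Lu)·(Φu) = c_α |x|⁻¹ W(G, ω) + c_α div F`,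

where `W` (`fW`) is a quadratic form in `G` and `F` (`fF`) is an explicit field of size
`O(|x|⁻²)`. Besides the terms coming directly from the integration by parts, `F` contains a
tangential null Lagrangian, which turns part of the first-order terms into the cofactor form
`ωᵀ cof(G) ω`. The identity is purely algebraic (`div_fF`). The divergence theorem with an isolated
singularity (`div_singular`, via a cutoff) leaves only the flux through infinitesimal spheres
around the origin, which equals `|u(0)|²/2`; in polar coordinates this gives `energy_identity`:

  `∫ (Lu)·(Φu) = |u(0)|²/2 + c_α ∫₀^∞ r ∫_{S²} W(Du(rω), ω) dσ dr`.

It remains to bound the inner integral below for each `r > 0`. Differentiating the spherical mean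
under the integral sign, `Du(rω) = a ⊗ ω + H` with `a = ū'(r)` and `H = Dv(rω)`, and `Hω` has mean
zero on the sphere. Elementary inequalities bound `W` below pointwise (`fW_lower`) by

  `|a|² + 2 a·Hω + 3(B₁₁ - 1)(a·ω)² + 2√3 B₁₂ |a·ω||H| + B₂₂|H|²`,

where the cofactor term is handled by the sum-of-squares identity in `cof_lower`. Integrating over
the sphere, with `∫ (a·ω)² = (4π/3)|a|²` and the Cauchy-Schwarz inequality for the mixed term
(recall `B₁₂ ≤ 0`), gives exactly `wᵀ B₋ w` (`radial_bound`).
-/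

open MeasureTheory Metric Real Filter

noncomputable section

/-- `ℝ³` as Euclidean space. -/
abbrev E3 : Type := EuclideanSpace ℝ (Fin 3)

/-- Partial derivative `∂ᵢ f` on `ℝ³`. -/
def pd (i : Fin 3) (f : E3 → ℝ) (x : E3) : ℝ :=
  fderiv ℝ f x (EuclideanSpace.single i 1)

/-- Laplacian on `ℝ³`. -/
def lap (f : E3 → ℝ) (x : E3) : ℝ := ∑ i, pd i (pd i f) x

/-- Divergence of a vector field on `ℝ³`. -/
def divg (u : E3 → Fin 3 → ℝ) (x : E3) : ℝ := ∑ k, pd k (fun y => u y k) x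

/-- The 3D Lamé operator `(Lu)ᵢ = -Δuᵢ - α ∂ᵢ (div u)`. -/
def lame (α : ℝ) (u : E3 → Fin 3 → ℝ) (x : E3) (i : Fin 3) : ℝ :=
  - lap (fun y => u y i) x - α * pd i (divg u) x

/-- The constant `c_α = (α+2)/(8π(α+1))`. -/
def cA (α : ℝ) : ℝ := (α + 2) / (8 * Real.pi * (α + 1))

/-- The fundamental matrix `Φ` of the 3D Lamé system:
`Φ_ij(x) = c_α |x|⁻¹ (δ_ij + (α/(α+2)) xᵢxⱼ/|x|²)`. -/
def Phi (α : ℝ) (x : E3) (i j : Fin 3) : ℝ :=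
  cA α * ‖x‖⁻¹ * ((if i = j then (1 : ℝ) else 0) + (α / (α + 2)) * (x i * x j) / ‖x‖ ^ 2)

/-- `u ∈ C₀^∞(U; ℝ³)`: smooth, compactly supported, with support inside `U`. -/
def IsTestOn (U : Set E3) (u : E3 → Fin 3 → ℝ) : Prop :=
  ContDiff ℝ (⊤ : ℕ∞) u ∧ HasCompactSupport u ∧ tsupport u ⊆ U

/-- `∫_{ℝ³} (Lu)·(Φ(·-y) u) dx`. -/
def lameEnergy (α : ℝ) (u : E3 → Fin 3 → ℝ) (y : E3) : ℝ :=
  ∫ x : E3, ∑ i, ∑ j, lame α u x i * Phi α (x - y) i j * u x j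

/-- The surface measure on the unit sphere `S² ⊂ ℝ³` (total mass `4π`). -/
def sphMeas : Measure (sphere (0 : E3) 1) := volume.toSphere

/-- `∫_{S²} f(rω) dσ(ω)`. -/
def sphInt (f : E3 → ℝ) (r : ℝ) : ℝ := ∫ ω : sphere (0 : E3) 1, f (r • (ω : E3)) ∂sphMeas

/-- `(ū, v)` is the spherical-mean decomposition of `u`:
`ūᵢ(r) = (1/(4π)) ∫_{S²} uᵢ(rω) dσ(ω)` and `uᵢ(x) = ūᵢ(|x|) + vᵢ(x)`. -/
def IsSphericalMeanDecomp (u : E3 → Fin 3 → ℝ) (ub : Fin 3 → ℝ → ℝ)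
    (v : E3 → Fin 3 → ℝ) : Prop :=
  (∀ i r, ub i r = (1 / (4 * Real.pi)) * sphInt (fun x => u x i) r) ∧
  (∀ x i, u x i = ub i ‖x‖ + v x i)

/-- The matrix `B₋(α)`. -/
def Bminus (α : ℝ) : Matrix (Fin 2) (Fin 2) ℝ :=
  !![1 + (α / 3) * ((2 * α + 3) / (α + 2)),
       (α / 2) * ((3 * α + 4) / (α + 2)) + α / (2 * Real.sqrt 3);
     (α / 2) * ((3 * α + 4) / (α + 2)) + α / (2 * Real.sqrt 3),
       1 + 3 * α + (α / (α + 2)) * (1 + (1 + Real.sqrt 3) / Real.sqrt 2 - Real.sqrt 3 * α)]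

/-! ### Polar coordinates -/

/-- `∫_{S²} Ψ(rω, ω) dσ(ω)`. Densities with a direction-dependent limit at the origin are encoded
as `x ↦ Ψ x (x/|x|)` with `Ψ` jointly continuous, so that `sphJ Ψ` is continuous up to `r = 0`. -/
def sphJ (Ψ : E3 → E3 → ℝ) (r : ℝ) : ℝ :=
  ∫ ω : sphere (0 : E3) 1, Ψ (r • (ω : E3)) (ω : E3) ∂sphMeas

instance sphMeas_finite : IsFiniteMeasure sphMeas := by
  unfold sphMeas; infer_instance

lemma sphMeas_real_univ : sphMeas.real Set.univ = 4 * Real.pi := by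
  unfold sphMeas
  rw [Measure.toSphere_real_apply_univ, measureReal_def, EuclideanSpace.volume_ball_fin_three]
  have h : (0 : ℝ) ≤ Real.pi * 4 / 3 := by positivity
  simp [ENNReal.toReal_ofReal h]
  ring

lemma sphere_integrable {f : E3 → ℝ} (hf : Continuous f) :
    Integrable (fun ω : sphere (0 : E3) 1 => f ω) sphMeas :=
  (hf.comp continuous_subtype_val).integrable_of_hasCompactSupport
    (HasCompactSupport.of_compactSpace _)

lemma sphJ_continuous {Ψ : E3 → E3 → ℝ} (h : Continuous fun p : E3 × E3 => Ψ p.1 p.2) :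
    Continuous (sphJ Ψ) := by
  unfold sphJ
  have := continuous_parametric_integral_of_continuous (μ := sphMeas)
    (f := fun (r : ℝ) (ω : sphere (0 : E3) 1) => Ψ (r • (ω : E3)) (ω : E3))
    (h.comp (f := fun p : ℝ × sphere (0 : E3) 1 => (p.1 • (p.2 : E3), (p.2 : E3))) (by fun_prop))
    (s := Set.univ) isCompact_univ
  simpa using this

lemma sphere_norm (ω : sphere (0 : E3) 1) : ‖(ω : E3)‖ = 1 := by simp

lemma sphJ_zero {Ψ : E3 → E3 → ℝ} {R : ℝ} (hR : ∀ x y, R ≤ ‖x‖ → Ψ x y = 0) {r : ℝ}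
    (h0 : 0 ≤ r) (h : R ≤ r) : sphJ Ψ r = 0 := by
  unfold sphJ
  rw [← integral_zero (sphere (0 : E3) 1) ℝ (μ := sphMeas)]
  congr 1
  ext ω
  exact hR _ _ (by simp [norm_smul, abs_of_nonneg h0, h])

lemma integrableOn_Ioi_of_cont {f : ℝ → ℝ} (hf : Continuous f) {R : ℝ}
    (hR : ∀ r, 0 ≤ r → R ≤ r → f r = 0) : IntegrableOn f (Set.Ioi 0) := by
  have h1 : IntegrableOn f (Set.Icc 0 (max R 0)) := hf.continuousOn.integrableOn_Icc
  refine IntegrableOn.of_forall_sdiff_eq_zero h1 measurableSet_Ioi ?_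
  intro x hx
  simp only [Set.mem_sdiff, Set.mem_Ioi, Set.mem_Icc, not_and, not_le] at hx
  have := hx.2 hx.1.le
  exact hR x hx.1.le ((le_max_left _ _).trans this.le)

/-- Near the origin the function is `O(|x|⁻²)`, which is integrable in dimension three. -/
lemma polar_integrable {Ψ : E3 → E3 → ℝ} (h : Continuous fun p : E3 × E3 => Ψ p.1 p.2)
    {R : ℝ} (hR : ∀ x y, R ≤ ‖x‖ → Ψ x y = 0) :
    Integrable (fun x : E3 => (‖x‖⁻¹) ^ 2 * Ψ x (‖x‖⁻¹ • x)) := by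
  obtain ⟨C, hC⟩ : ∃ C, ∀ p ∈ (closedBall (0 : E3) R ×ˢ closedBall (0 : E3) 1),
      ‖Ψ p.1 p.2‖ ≤ C :=
    ((isCompact_closedBall _ _).prod (isCompact_closedBall _ _)).exists_bound_of_continuousOn
      h.continuousOn
  have hdom : Integrable (fun x : E3 =>
      (fun r : ℝ => (Set.Iio R).indicator (fun r => (r⁻¹) ^ 2 * |C|) r) ‖x‖) := by
    rw [integrable_fun_norm_addHaar (μ := (volume : Measure E3))
      (f := fun r : ℝ => (Set.Iio R).indicator (fun r => (r⁻¹) ^ 2 * |C|) r)]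
    have h1 : IntegrableOn (fun _ : ℝ => |C|) (Set.Ioo 0 R) := by simp
    have h2 : IntegrableOn ((Set.Ioo 0 R).indicator (fun _ : ℝ => |C|)) (Set.Ioi 0) := by
      have := (integrable_indicator_iff measurableSet_Ioo).2 h1
      exact this.integrableOn
    refine h2.congr_fun (fun r hr => ?_) measurableSet_Ioi
    have hr : 0 < r := hr
    by_cases hrR : r < R
    · simp [hr, hrR]; field_simp
    · simp [hrR]
  refine hdom.mono' ?_ ?_
  · have hm : Measurable fun x : E3 => (x, ‖x‖⁻¹ • x) := by fun_prop
    have := h.measurable.comp hm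
    exact ((measurable_norm.inv.pow_const 2).mul this).aestronglyMeasurable
  · refine Filter.Eventually.of_forall fun x => ?_
    by_cases hx : ‖x‖ < R
    · have hb := hC (x, ‖x‖⁻¹ • x) (by
        constructor
        · simp [hx.le]
        · simp only [mem_closedBall, dist_zero_right, norm_smul, norm_inv, norm_norm]
          exact inv_mul_le_one)
      simp only [Set.indicator, Set.mem_Iio, hx, if_true, norm_mul, norm_pow, norm_inv, norm_norm]
      gcongr
      exact hb.trans (le_abs_self C)
    · simp [hx, hR x _ (not_lt.1 hx)]

/-- Integration in polar coordinates; the factor `|x|⁻²` cancels the Jacobian `r²`. -/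
lemma polar_integral {Ψ : E3 → E3 → ℝ} (h : Continuous fun p : E3 × E3 => Ψ p.1 p.2)
    {R : ℝ} (hR : ∀ x y, R ≤ ‖x‖ → Ψ x y = 0) :
    ∫ x : E3, (‖x‖⁻¹) ^ 2 * Ψ x (‖x‖⁻¹ • x) = ∫ r in Set.Ioi (0 : ℝ), sphJ Ψ r := by
  have hIntegr := polar_integrable h hR
  set g : E3 → ℝ := fun x => (‖x‖⁻¹) ^ 2 * Ψ x (‖x‖⁻¹ • x) with hg
  have hmp := (volume : Measure E3).measurePreserving_homeomorphUnitSphereProd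
  have hfr : Module.finrank ℝ E3 - 1 = 2 := by simp
  rw [hfr] at hmp
  have hemb := (homeomorphUnitSphereProd E3).measurableEmbedding
  let G : sphere (0 : E3) 1 × Set.Ioi (0 : ℝ) → ℝ := fun p => g ((p.2 : ℝ) • (p.1 : E3))
  have hcomp : ∀ x : ({0}ᶜ : Set E3), G (homeomorphUnitSphereProd E3 x) = g x := by
    intro x
    have hx : ‖(x : E3)‖ ≠ 0 := norm_ne_zero_iff.2 x.2
    simp [G, smul_smul, hx]
  have hI : Integrable G ((volume : Measure E3).toSphere.prod (Measure.volumeIoiPow 2)) := by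
    rw [← hmp.integrable_comp_emb hemb]
    have h3 : IntegrableOn g ({0}ᶜ : Set E3) := hIntegr.integrableOn
    rw [integrableOn_iff_comap_subtypeVal (by measurability)] at h3
    refine h3.congr (Filter.Eventually.of_forall fun x => ?_)
    simp [hcomp]
  calc ∫ x : E3, g x = ∫ x : ({0}ᶜ : Set E3), g x ∂((volume : Measure E3).comap (↑)) := by
        rw [integral_subtype_comap (measurableSet_singleton _).compl g, restrict_compl_singleton]
    _ = ∫ p, G p ∂((volume : Measure E3).toSphere.prod (Measure.volumeIoiPow 2)) := by
        rw [← hmp.integral_comp hemb]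
        exact integral_congr_ae (Filter.Eventually.of_forall fun x => (hcomp x).symm)
    _ = ∫ r : Set.Ioi (0 : ℝ), ∫ ω, G (ω, r) ∂(volume : Measure E3).toSphere
          ∂(Measure.volumeIoiPow 2) := integral_prod_symm _ hI
    _ = ∫ r : Set.Ioi (0 : ℝ), ((r : ℝ)⁻¹) ^ 2 * sphJ Ψ r ∂(Measure.volumeIoiPow 2) := by
        refine integral_congr_ae (Filter.Eventually.of_forall fun r => ?_)
        have hr : (0 : ℝ) < r := r.2
        show _ = _ * ∫ ω, _ ∂(volume : Measure E3).toSphere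
        rw [← integral_const_mul]
        refine integral_congr_ae (Filter.Eventually.of_forall fun ω => ?_)
        simp [G, hg, norm_smul, abs_of_pos hr, smul_smul, hr.ne']
    _ = _ := by
        simp only [Measure.volumeIoiPow, ENNReal.ofReal]
        rw [integral_withDensity_eq_integral_smul,
          integral_subtype_comap measurableSet_Ioi
            fun a ↦ Real.toNNReal (a ^ 2) • (((a : ℝ)⁻¹) ^ 2 * sphJ Ψ a),
          setIntegral_congr_fun measurableSet_Ioi fun x hx ↦ ?_]
        · have hx : 0 < x := hx
          rw [NNReal.smul_def, Real.coe_toNNReal _ (pow_nonneg hx.le _), smul_eq_mul]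
          field_simp
        · exact (measurable_subtype_coe.pow_const _).real_toNNReal

/-! ### Second moments of the surface measure -/

/-- Rotation invariance of the surface measure, deduced from that of Lebesgue measure by testing
against radial profiles in polar coordinates. -/
lemma sphere_isometry {f : E3 → ℝ} (hf : Continuous f) (e : E3 ≃ₗᵢ[ℝ] E3) :
    ∫ ω : sphere (0 : E3) 1, f (e ω) ∂sphMeas = ∫ ω : sphere (0 : E3) 1, f ω ∂sphMeas := by
  let ψ : ℝ → ℝ := fun r => max 0 (1 - r)
  have hψ : Continuous ψ := by fun_prop
  have hψ0 : ∀ r, 1 ≤ r → ψ r = 0 := fun r hr => max_eq_left (by linarith)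
  have key : ∀ g : E3 → ℝ, Continuous g →
      ∫ x : E3, (‖x‖⁻¹) ^ 2 * (ψ ‖x‖ * g (‖x‖⁻¹ • x)) =
        (∫ r in Set.Ioi (0 : ℝ), ψ r) * ∫ ω : sphere (0 : E3) 1, g ω ∂sphMeas := by
    intro g hg
    rw [polar_integral (Ψ := fun x y => ψ ‖x‖ * g y) (by fun_prop) (R := 1)
      (fun x y hx => by simp [hψ0 _ hx]), ← integral_mul_const]
    refine setIntegral_congr_fun measurableSet_Ioi fun r hr => ?_
    have hr : 0 < r := hr
    simp [sphJ, norm_smul, abs_of_pos hr, integral_const_mul]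
  have hpos : 0 < ∫ r in Set.Ioi (0 : ℝ), ψ r := by
    have hi : IntegrableOn ψ (Set.Ioi 0) := integrableOn_Ioi_of_cont hψ (R := 1)
      fun r _ h => hψ0 r h
    rw [setIntegral_pos_iff_support_of_nonneg_ae (f := ψ)
      (Filter.Eventually.of_forall fun r => le_max_left _ _) hi]
    have : Set.Ioo (0 : ℝ) 1 ⊆ Function.support ψ ∩ Set.Ioi 0 := by
      intro r hr
      refine ⟨?_, hr.1⟩
      have : 0 < ψ r := lt_max_of_lt_right (by linarith [hr.2])
      exact this.ne'
    refine lt_of_lt_of_le ?_ (measure_mono this)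
    simp
  have h1 := key f hf
  have h2 := key (fun y => f (e y)) (hf.comp e.continuous)
  have h3 := (e.measurePreserving).integral_comp e.toHomeomorph.measurableEmbedding
    (fun x : E3 => (‖x‖⁻¹) ^ 2 * (ψ ‖x‖ * f (‖x‖⁻¹ • x)))
  simp only [LinearIsometryEquiv.norm_map] at h3
  simp only [map_smul] at h2
  rw [h2, h1] at h3
  exact mul_left_cancel₀ hpos.ne' h3

lemma sphere_sq_sum (ω : sphere (0 : E3) 1) :
    (ω : E3) 0 ^ 2 + (ω : E3) 1 ^ 2 + (ω : E3) 2 ^ 2 = 1 := by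
  have h := EuclideanSpace.norm_sq_eq (ω : E3)
  simpa [Fin.sum_univ_three] using h.symm

/-- Second moments of the surface measure: `∫ ωᵢωⱼ dσ = (4π/3) δᵢⱼ`. -/
lemma sphere_moment (i j : Fin 3) :
    ∫ ω : sphere (0 : E3) 1, (ω : E3) i * (ω : E3) j ∂sphMeas =
      if i = j then 4 * Real.pi / 3 else 0 := by
  have hc : ∀ i j : Fin 3, Continuous fun y : E3 => y i * y j := fun i j => by fun_prop
  by_cases hij : i = j
  · subst hij
    -- Swapping coordinates makes the diagonal moments equal, and they add up to `4π`.
    have hsw : ∀ i j : Fin 3, ∫ ω : sphere (0 : E3) 1, (ω : E3) i * (ω : E3) i ∂sphMeas =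
        ∫ ω : sphere (0 : E3) 1, (ω : E3) j * (ω : E3) j ∂sphMeas := by
      intro i j
      have := sphere_isometry (hc j j)
        (LinearIsometryEquiv.piLpCongrLeft 2 ℝ ℝ (Equiv.swap i j))
      rw [← this]
      simp
    have hsum : ∑ k : Fin 3, ∫ ω : sphere (0 : E3) 1, (ω : E3) k * (ω : E3) k ∂sphMeas
        = 4 * Real.pi := by
      rw [← integral_finsetSum _ fun k _ => sphere_integrable (hc k k), ← sphMeas_real_univ]
      have : ∀ ω : sphere (0 : E3) 1, ∑ k, (ω : E3) k * (ω : E3) k = 1 := by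
        intro ω
        have := sphere_sq_sum ω
        simp only [Fin.sum_univ_three]
        linarith
      simp [this]
    rw [Finset.sum_congr rfl fun k _ => hsw k i] at hsum
    simp at hsum ⊢
    linarith
  -- Reflecting the `i`-th coordinate shows that an off-diagonal moment equals its negative.
  · have := sphere_isometry (hc i j) (LinearIsometryEquiv.piLpCongrRight 2 fun k =>
      if k = i then LinearIsometryEquiv.neg ℝ else LinearIsometryEquiv.refl ℝ ℝ)
    have hji : ¬ j = i := fun h => hij h.symm
    simp [hij, hji, integral_neg] at this ⊢
    linarith

/-! ### Divergence theorem with a point singularity -/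

/-- The cutoff profile: `0` for `r ≤ t`, and `1` for `r ≥ 2t`. -/
def cut (t r : ℝ) : ℝ := Real.smoothTransition (t⁻¹ * r - 1)

/-- Derivative of `Real.smoothTransition`. -/
def stD (s : ℝ) : ℝ := deriv Real.smoothTransition s

lemma stD_continuous : Continuous stD :=
  (Real.smoothTransition.contDiff (n := 1)).continuous_deriv le_rfl

lemma st_hasDerivAt (s : ℝ) : HasDerivAt Real.smoothTransition (stD s) s :=
  ((Real.smoothTransition.contDiff (n := 1)).differentiable (by simp) s).hasDerivAt

lemma stD_of_neg {s : ℝ} (hs : s < 0) : stD s = 0 := by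
  have : Real.smoothTransition =ᶠ[nhds s] fun _ => (0 : ℝ) := by
    filter_upwards [Iio_mem_nhds hs] with y hy
    exact Real.smoothTransition.zero_of_nonpos (le_of_lt hy)
  simp [stD, this.deriv_eq]

lemma stD_of_one_lt {s : ℝ} (hs : 1 < s) : stD s = 0 := by
  have : Real.smoothTransition =ᶠ[nhds s] fun _ => (1 : ℝ) := by
    filter_upwards [Ioi_mem_nhds hs] with y hy
    exact Real.smoothTransition.one_of_one_le (le_of_lt hy)
  simp [stD, this.deriv_eq]

lemma integral_stD : ∫ s in (1 : ℝ)..2, stD (s - 1) = 1 := by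
  rw [intervalIntegral.integral_comp_sub_right (fun s => stD s) 1]
  norm_num
  rw [intervalIntegral.integral_eq_sub_of_hasDerivAt (fun x _ => st_hasDerivAt x)
    (stD_continuous.intervalIntegrable _ _)]
  simp

lemma cut_hasDerivAt (t r : ℝ) : HasDerivAt (cut t) (t⁻¹ * stD (t⁻¹ * r - 1)) r := by
  have h1 : HasDerivAt (fun r : ℝ => t⁻¹ * r - 1) t⁻¹ r := by
    simpa using ((hasDerivAt_id r).const_mul t⁻¹).sub_const 1
  have := (st_hasDerivAt (t⁻¹ * r - 1)).comp r h1
  rw [mul_comm]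
  exact this

lemma cut_contDiff (t : ℝ) : ContDiff ℝ 1 (cut t) := by
  unfold cut
  exact (Real.smoothTransition.contDiff (n := 1)).comp (by fun_prop)

lemma norm_cut_le (t r : ℝ) : ‖cut t r‖ ≤ 1 := by
  rw [cut, Real.norm_eq_abs, abs_of_nonneg (Real.smoothTransition.nonneg _)]
  exact Real.smoothTransition.le_one _

lemma pd_norm {x : E3} (hx : x ≠ 0) (k : Fin 3) :
    pd k (fun y => ‖y‖) x = ‖x‖⁻¹ * x k := by
  have hd : DifferentiableAt ℝ (fun y : E3 => ‖y‖) x :=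
    (contDiffAt_norm ℝ hx (n := 1)).differentiableAt (by simp)
  have h2 : HasFDerivAt (fun y : E3 => ‖y‖ ^ 2) (2 • (innerSL ℝ x)) x :=
    (hasStrictFDerivAt_norm_sq x).hasFDerivAt
  have h3 : HasFDerivAt (fun y : E3 => ‖y‖ ^ 2) _ x := hd.hasFDerivAt.pow 2
  have h4 := congrArg (fun L : E3 →L[ℝ] ℝ => L (EuclideanSpace.single k 1)) (h2.unique h3)
  have hn : ‖x‖ ≠ 0 := norm_ne_zero_iff.2 hx
  simp [EuclideanSpace.inner_single_right] at h4
  unfold pd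
  field_simp
  linarith

lemma integral_pd_zero {f : E3 → ℝ} (hf : ContDiff ℝ 1 f) (hs : HasCompactSupport f)
    (k : Fin 3) : Integrable (pd k f) ∧ ∫ x, pd k f x = 0 := by
  have hc : Continuous (pd k f) := by
    unfold pd
    exact (hf.continuous_fderiv (by simp)).clm_apply continuous_const
  have hs' : HasCompactSupport (pd k f) := hs.fderiv_apply ℝ _
  have hi := hc.integrable_of_hasCompactSupport hs' (μ := volume)
  refine ⟨hi, ?_⟩
  have := integral_mul_fderiv_eq_neg_fderiv_mul_of_integrable (μ := (volume : Measure E3))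
    (f := fun _ => (1 : ℝ)) (g := f) (v := EuclideanSpace.single k (1 : ℝ))
    (by simp) (by simp only [one_mul]; exact hi)
    (by simpa using hf.continuous.integrable_of_hasCompactSupport hs (μ := volume))
    (fun x _ => by fun_prop) (fun x _ => hf.differentiable (by simp) x)
  simpa [pd] using this

/-- Divergence theorem for a compactly supported field with a singularity at the origin:
only the flux through infinitesimal spheres contributes. Here `Ψ (x, x/|x|)` is the
normalized flux density `|x|² F·(x/|x|)`. -/
lemma div_singular {F : Fin 3 → E3 → ℝ} {Ψ : E3 → E3 → ℝ} {R : ℝ}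
    (hF : ∀ k x, x ≠ 0 → ContDiffAt ℝ 1 (F k) x)
    (hFR : ∀ k x, R ≤ ‖x‖ → F k x = 0)
    (hΨ : Continuous fun p : E3 × E3 => Ψ p.1 p.2)
    (hΨR : ∀ x y, R ≤ ‖x‖ → Ψ x y = 0)
    (hflux : ∀ x, x ≠ 0 → ‖x‖ * ∑ k, x k * F k x = Ψ x (‖x‖⁻¹ • x))
    (hIntegr : Integrable fun x => ∑ k, pd k (F k) x) :
    ∫ x, ∑ k, pd k (F k) x = - sphJ Ψ 0 := by
  -- Away from the origin the cut-off field is smooth, so its divergence has integral zero; the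
  -- gradient of the cutoff produces an average of fluxes over the spheres of radius `t s`,
  -- `1 ≤ s ≤ 2`.
  have hstep : ∀ t : ℝ, 0 < t → ∫ x : E3, cut t ‖x‖ * ∑ k, pd k (F k) x =
      - ∫ s in (1 : ℝ)..2, stD (s - 1) * sphJ Ψ (t * s) := by
    intro t ht
    have hcut0 : ∀ x : E3, ‖x‖ ≤ t → cut t ‖x‖ = 0 := fun x hx =>
      Real.smoothTransition.zero_of_nonpos (by
        have : t⁻¹ * ‖x‖ ≤ 1 := by rw [inv_mul_le_iff₀ ht]; simpa
        linarith)
    have hC : ∀ k, ContDiff ℝ 1 (fun x => cut t ‖x‖ * F k x) := by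
      intro k
      rw [contDiff_iff_contDiffAt]
      intro x
      by_cases hx : x = 0
      · subst hx
        have : (fun x => cut t ‖x‖ * F k x) =ᶠ[nhds 0] fun _ => 0 := by
          filter_upwards [closedBall_mem_nhds (0 : E3) ht] with y hy
          rw [hcut0 y (by simpa using hy), zero_mul]
        exact contDiffAt_const.congr_of_eventuallyEq this
      · exact (((cut_contDiff t).contDiffAt).comp x (contDiffAt_norm ℝ hx)).mul (hF k x hx)
    have hS : ∀ k, HasCompactSupport (fun x => cut t ‖x‖ * F k x) := by
      intro k
      refine HasCompactSupport.intro (isCompact_closedBall (0 : E3) R) fun x hx => ?_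
      rw [hFR k x (by simp at hx; exact hx.le), mul_zero]
    have hpd : ∀ x : E3, ∑ k, pd k (fun x => cut t ‖x‖ * F k x) x =
        cut t ‖x‖ * ∑ k, pd k (F k) x +
          (‖x‖⁻¹) ^ 2 * ((t⁻¹ * stD (t⁻¹ * ‖x‖ - 1)) * Ψ x (‖x‖⁻¹ • x)) := by
      intro x
      by_cases hx : x = 0
      · subst hx
        have : ∀ k, pd k (fun x => cut t ‖x‖ * F k x) 0 = 0 := by
          intro k
          have : (fun x => cut t ‖x‖ * F k x) =ᶠ[nhds 0] fun _ => 0 := by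
            filter_upwards [closedBall_mem_nhds (0 : E3) ht] with y hy
            rw [hcut0 y (by simpa using hy), zero_mul]
          simp [pd, this.fderiv_eq]
        simp only [this]
        simp [cut, Real.smoothTransition.zero_of_nonpos]
      · have hn : ‖x‖ ≠ 0 := norm_ne_zero_iff.2 hx
        have hd : DifferentiableAt ℝ (fun y : E3 => ‖y‖) x :=
          (contDiffAt_norm ℝ hx (n := 1)).differentiableAt (by simp)
        have : ∀ k, pd k (fun x => cut t ‖x‖ * F k x) x = cut t ‖x‖ * pd k (F k) x +
            (t⁻¹ * stD (t⁻¹ * ‖x‖ - 1)) * (‖x‖⁻¹ * x k) * F k x := by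
          intro k
          have h1 := (cut_hasDerivAt t ‖x‖).comp_hasFDerivAt x hd.hasFDerivAt
          have h2 := ((hF k x hx).differentiableAt (by simp)).hasFDerivAt
          have h3 := (h1.mul h2).fderiv
          have h4 := pd_norm hx k
          unfold pd at h4 ⊢
          rw [← h4]
          have h5 := congrArg (fun L : E3 →L[ℝ] ℝ => L (EuclideanSpace.single k 1)) h3
          simp only [Function.comp_def] at h5
          refine Eq.trans h5 ?_
          simp
          ring
        rw [← hflux x hx]
        simp only [this, Fin.sum_univ_three]
        field_simp
        ring
    have hzero : ∫ x : E3, ∑ k, pd k (fun x => cut t ‖x‖ * F k x) x = 0 := by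
      rw [integral_finsetSum _ fun k _ => (integral_pd_zero (hC k) (hS k) k).1]
      simp [fun k => (integral_pd_zero (hC k) (hS k) k).2]
    have hΨ' : Continuous fun p : E3 × E3 =>
        (t⁻¹ * stD (t⁻¹ * ‖p.1‖ - 1)) * Ψ p.1 p.2 := by
      have := stD_continuous
      fun_prop
    have hΨR' : ∀ x y : E3, R ≤ ‖x‖ → (t⁻¹ * stD (t⁻¹ * ‖x‖ - 1)) * Ψ x y = 0 :=
      fun x y h => by rw [hΨR x y h, mul_zero]
    have hcm : Integrable fun x : E3 => cut t ‖x‖ * ∑ k, pd k (F k) x := by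
      refine hIntegr.bdd_mul (c := 1) ?_ ?_
      · exact ((cut_contDiff t).continuous.comp continuous_norm).aestronglyMeasurable
      · refine Filter.Eventually.of_forall fun x => ?_
        exact norm_cut_le t ‖x‖
    simp only [hpd] at hzero
    rw [integral_add hcm (polar_integrable (Ψ := fun x y => (t⁻¹ * stD (t⁻¹ * ‖x‖ - 1)) * Ψ x y)
      hΨ' hΨR'), polar_integral (Ψ := fun x y => (t⁻¹ * stD (t⁻¹ * ‖x‖ - 1)) * Ψ x y)
      hΨ' hΨR'] at hzero
    rw [eq_neg_of_add_eq_zero_left hzero]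
    congr 1
    have e1 : ∫ r in Set.Ioi (0 : ℝ),
        sphJ (fun x y => (t⁻¹ * stD (t⁻¹ * ‖x‖ - 1)) * Ψ x y) r =
        ∫ r in Set.Ioi (0 : ℝ), (fun s => t⁻¹ * (stD (s - 1) * sphJ Ψ (t * s))) (t⁻¹ * r) := by
      refine setIntegral_congr_fun measurableSet_Ioi fun r hr => ?_
      have hr : 0 < r := hr
      simp only [sphJ, norm_smul, sphere_norm, Real.norm_eq_abs, abs_of_pos hr, mul_one]
      rw [integral_const_mul, mul_inv_cancel_left₀ ht.ne']
      ring
    rw [e1, integral_comp_mul_left_Ioi (fun s => t⁻¹ * (stD (s - 1) * sphJ Ψ (t * s))) _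
      (inv_pos.2 ht)]
    simp only [mul_zero, inv_inv, smul_eq_mul]
    rw [integral_const_mul, mul_inv_cancel_left₀ ht.ne',
      intervalIntegral.integral_of_le (by norm_num), ← integral_Icc_eq_integral_Ioc]
    refine setIntegral_eq_of_subset_of_forall_sdiff_eq_zero measurableSet_Ioi ?_ ?_
    · intro s hs
      exact lt_of_lt_of_le one_pos hs.1
    · intro s hs
      have h2 : s < 1 ∨ 2 < s := by
        by_contra hcon
        push Not at hcon
        exact hs.2 ⟨hcon.1, hcon.2⟩
      rcases h2 with h2 | h2
      · rw [stD_of_neg (by linarith), zero_mul]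
      · rw [stD_of_one_lt (by linarith), zero_mul]
  have hlim1 : Tendsto (fun t : ℝ => ∫ x : E3, cut t ‖x‖ * ∑ k, pd k (F k) x)
      (nhdsWithin 0 (Set.Ioi 0)) (nhds (∫ x, ∑ k, pd k (F k) x)) := by
    refine tendsto_integral_filter_of_dominated_convergence
      (fun x => ‖∑ k, pd k (F k) x‖) ?_ ?_ hIntegr.norm ?_
    · refine Filter.Eventually.of_forall fun t => ?_
      exact ((cut_contDiff t).continuous.comp continuous_norm).aestronglyMeasurable.mul
        hIntegr.aestronglyMeasurable
    · refine Filter.Eventually.of_forall fun t => Filter.Eventually.of_forall fun x => ?_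
      rw [norm_mul]
      refine mul_le_of_le_one_left (norm_nonneg _) ?_
      exact norm_cut_le t ‖x‖
    · have : ∀ᵐ x : E3, x ≠ 0 := by simp [ae_iff]
      filter_upwards [this] with x hx
      have hn : 0 < ‖x‖ := norm_pos_iff.2 hx
      refine tendsto_const_nhds.congr' ?_
      have : Set.Ioo (0 : ℝ) (‖x‖ / 2) ∈ nhdsWithin (0 : ℝ) (Set.Ioi 0) :=
        Ioo_mem_nhdsGT (by positivity)
      filter_upwards [this] with t ht
      have h2 : 2 ≤ t⁻¹ * ‖x‖ := by
        rw [le_inv_mul_iff₀ ht.1]; linarith [ht.2]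
      rw [cut, Real.smoothTransition.one_of_one_le (by linarith), one_mul]
  have hlim2 : Tendsto (fun t : ℝ => ∫ x : E3, cut t ‖x‖ * ∑ k, pd k (F k) x)
      (nhdsWithin 0 (Set.Ioi 0)) (nhds (- sphJ Ψ 0)) := by
    have hcont : Continuous fun t : ℝ => - ∫ s in (1 : ℝ)..2, stD (s - 1) * sphJ Ψ (t * s) := by
      have h1 := stD_continuous
      have h2 := sphJ_continuous hΨ
      refine (intervalIntegral.continuous_parametric_intervalIntegral_of_continuous' ?_ _ _).neg
      simp only [Function.uncurry_def]
      fun_prop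
    have h0 := hcont.tendsto 0
    simp only [zero_mul, intervalIntegral.integral_mul_const, integral_stD, one_mul] at h0
    refine (h0.mono_left nhdsWithin_le_nhds).congr' ?_
    filter_upwards [self_mem_nhdsWithin] with t ht
    exact (hstep t ht).symm
  exact tendsto_nhds_unique hlim1 hlim2

/-! ### The flux field and the quadratic form -/

section PdRules
variable {f g : E3 → ℝ} {x : E3}

lemma pd_add (k : Fin 3) (hf : DifferentiableAt ℝ f x) (hg : DifferentiableAt ℝ g x) :
    pd k (fun y => f y + g y) x = pd k f x + pd k g x := by
  simp only [pd]; rw [fderiv_fun_add hf hg]; rfl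

lemma pd_sub (k : Fin 3) (hf : DifferentiableAt ℝ f x) (hg : DifferentiableAt ℝ g x) :
    pd k (fun y => f y - g y) x = pd k f x - pd k g x := by
  simp only [pd]; rw [fderiv_fun_sub hf hg]; rfl

lemma pd_neg (k : Fin 3) : pd k (fun y => - f y) x = - pd k f x := by
  simp only [pd]; rw [fderiv_fun_neg]; rfl

lemma pd_mul (k : Fin 3) (hf : DifferentiableAt ℝ f x) (hg : DifferentiableAt ℝ g x) :
    pd k (fun y => f y * g y) x = pd k f x * g x + f x * pd k g x := by
  simp only [pd]; rw [fderiv_fun_mul hf hg]; simp; ring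

lemma pd_const (k : Fin 3) (c : ℝ) : pd k (fun _ => c) x = 0 := by
  simp [pd]

lemma pd_coord (k i : Fin 3) : pd k (fun y : E3 => y i) x = if i = k then 1 else 0 := by
  have : HasFDerivAt (fun y : E3 => y i) (EuclideanSpace.proj i : E3 →L[ℝ] ℝ) x :=
    (EuclideanSpace.proj i : E3 →L[ℝ] ℝ).hasFDerivAt
  simp [pd, this.fderiv]

lemma pd_norm_inv_pow (k : Fin 3) (m : ℕ) (hx : x ≠ 0) :
    pd k (fun y : E3 => (‖y‖⁻¹) ^ m) x = - m * (‖x‖⁻¹) ^ (m + 2) * x k := by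
  have hn : ‖x‖ ≠ 0 := norm_ne_zero_iff.2 hx
  have hd : DifferentiableAt ℝ (fun y : E3 => ‖y‖) x :=
    (contDiffAt_norm ℝ hx (n := 1)).differentiableAt (by simp)
  have h1 := ((hasDerivAt_inv hn).pow m).comp_hasFDerivAt x hd.hasFDerivAt
  have h2 := pd_norm hx k
  have h3 := congrArg (fun L : E3 →L[ℝ] ℝ => L (EuclideanSpace.single k 1)) h1.fderiv
  unfold pd at h2 ⊢
  refine Eq.trans h3 ?_
  simp only [smul_apply, smul_eq_mul, h2]
  rcases m with _ | m
  · simp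
  · simp only [Nat.add_sub_cancel]
    push_cast
    rw [← inv_pow]
    ring

end PdRules

/-- `∂ₖ uᵢ`. -/
def Gd (u : E3 → Fin 3 → ℝ) (i k : Fin 3) (x : E3) : ℝ := pd k (fun z => u z i) x

lemma contDiff_pd {f : E3 → ℝ} (hf : ContDiff ℝ (⊤ : ℕ∞) f) (k : Fin 3) :
    ContDiff ℝ (⊤ : ℕ∞) (pd k f) := by
  unfold pd
  exact (hf.fderiv_right (m := (⊤ : ℕ∞)) (by simp)).clm_apply contDiff_const

lemma pd_comm {f : E3 → ℝ} (hf : ContDiff ℝ (⊤ : ℕ∞) f) (k l : Fin 3) (x : E3) :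
    pd l (pd k f) x = pd k (pd l f) x := by
  have hd : DifferentiableAt ℝ (fderiv ℝ f) x :=
    ((hf.fderiv_right (m := 1) (by norm_cast)).differentiable (by simp)) x
  have hs : IsSymmSndFDerivAt ℝ f x := (hf.contDiffAt).isSymmSndFDerivAt
    (by simp only [minSmoothness_of_isRCLikeNormedField]; exact WithTop.coe_le_coe.2 (le_top : (2 : ℕ∞) ≤ ⊤))
  have h : ∀ a b : Fin 3, pd a (pd b f) x =
      fderiv ℝ (fderiv ℝ f) x (EuclideanSpace.single a 1) (EuclideanSpace.single b 1) := by
    intro a b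
    show fderiv ℝ (fun y => fderiv ℝ f y (EuclideanSpace.single b 1)) x _ = _
    rw [fderiv_clm_apply hd (by fun_prop)]
    simp
  rw [h, h]
  exact hs _ _

/-- The part of the flux field `fF` with weight `|x|⁻¹`: `-(Du)ᵀu - α (div u) u`. Here and below
`U i` stands for `uᵢ` and `G i k` for `∂ₖuᵢ`. -/
def fP (α : ℝ) (U : Fin 3 → E3 → ℝ) (G : Fin 3 → Fin 3 → E3 → ℝ) (k : Fin 3) (x : E3) : ℝ :=
  -(G 0 k x * U 0 x + G 1 k x * U 1 x + G 2 k x * U 2 x)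
    - α * ((G 0 0 x + G 1 1 x + G 2 2 x) * U k x)

/-- The triple product `x · (u × ∂ₗu)`. -/
def fT (U : Fin 3 → E3 → ℝ) (G : Fin 3 → Fin 3 → E3 → ℝ) (l : Fin 3) (x : E3) : ℝ :=
  x 0 * (U 1 x * G 2 l x - U 2 x * G 1 l x) + x 1 * (U 2 x * G 0 l x - U 0 x * G 2 l x)
    + x 2 * (U 0 x * G 1 l x - U 1 x * G 0 l x)

/-- The part of the flux field `fF` with weight `|x|⁻³`. Its last term is `-κ (x × f)ₖ`, where
`f` is `fT`; the index arithmetic is cyclic in `Fin 3`. Being orthogonal to `x`, that term carries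
no flux; its divergence produces the cofactor term of `fW`. -/
def fQ (α κ : ℝ) (U : Fin 3 → E3 → ℝ) (G : Fin 3 → Fin 3 → E3 → ℝ) (k : Fin 3) (x : E3) : ℝ :=
  -(κ * ((G 0 k x * x 0 + G 1 k x * x 1 + G 2 k x * x 2)
      * (x 0 * U 0 x + x 1 * U 1 x + x 2 * U 2 x)))
    - α * κ * ((G 0 0 x + G 1 1 x + G 2 2 x) * x k
      * (x 0 * U 0 x + x 1 * U 1 x + x 2 * U 2 x))
    - 1 / 2 * (x k * (U 0 x * U 0 x + U 1 x * U 1 x + U 2 x * U 2 x))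
    - κ * (x (k + 1) * fT U G (k + 2) x - x (k + 2) * fT U G (k + 1) x)

/-- The part of the flux field `fF` with weight `|x|⁻⁵`: `-(3/2) κ (x·u)² x`. -/
def fS (κ : ℝ) (U : Fin 3 → E3 → ℝ) (k : Fin 3) (x : E3) : ℝ :=
  -(3 / 2 * κ * (x k * ((x 0 * U 0 x + x 1 * U 1 x + x 2 * U 2 x)
    * (x 0 * U 0 x + x 1 * U 1 x + x 2 * U 2 x))))

/-- The field whose divergence is the difference between the energy density `(Lu)·(Φu)/c_α` and
`|x|⁻¹ W`, with `W` the quadratic form `fW`. -/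
def fF (α κ : ℝ) (U : Fin 3 → E3 → ℝ) (G : Fin 3 → Fin 3 → E3 → ℝ) (k : Fin 3) (x : E3) : ℝ :=
  (‖x‖⁻¹) ^ 1 * fP α U G k x + (‖x‖⁻¹) ^ 3 * fQ α κ U G k x + (‖x‖⁻¹) ^ 5 * fS κ U k x

/-- `yᵀ cof(G) y`. -/
def cofQ (G : Fin 3 → Fin 3 → ℝ) (y : Fin 3 → ℝ) : ℝ :=
  y 0 * ((G 1 1 * G 2 2 - G 1 2 * G 2 1) * y 0 + (G 1 2 * G 2 0 - G 1 0 * G 2 2) * y 1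
      + (G 1 0 * G 2 1 - G 1 1 * G 2 0) * y 2)
  + y 1 * ((G 2 1 * G 0 2 - G 2 2 * G 0 1) * y 0 + (G 2 2 * G 0 0 - G 2 0 * G 0 2) * y 1
      + (G 2 0 * G 0 1 - G 2 1 * G 0 0) * y 2)
  + y 2 * ((G 0 1 * G 1 2 - G 0 2 * G 1 1) * y 0 + (G 0 2 * G 1 0 - G 0 0 * G 1 2) * y 1
      + (G 0 0 * G 1 1 - G 0 1 * G 1 0) * y 2)

/-- The quadratic form of the energy density, as a function of `G = Du` and `y = x/|x|`. -/
def fW (α κ : ℝ) (G : Fin 3 → Fin 3 → ℝ) (y : Fin 3 → ℝ) : ℝ :=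
  (∑ i, ∑ k, G i k ^ 2) + κ * (∑ k, (∑ i, y i * G i k) ^ 2) + α * (∑ i, G i i) ^ 2
    + α * κ * ((∑ i, G i i) * ∑ i, ∑ k, y i * G i k * y k) - 2 * κ * cofQ G y

section Identity
variable {U : Fin 3 → E3 → ℝ} {G : Fin 3 → Fin 3 → E3 → ℝ}

lemma fP_contDiff (α : ℝ) (hU : ∀ i, ContDiff ℝ 1 (U i)) (hG : ∀ i k, ContDiff ℝ 1 (G i k))
    (k : Fin 3) : ContDiff ℝ 1 (fP α U G k) := by
  unfold fP; fun_prop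

lemma fQ_contDiff (α κ : ℝ) (hU : ∀ i, ContDiff ℝ 1 (U i)) (hG : ∀ i k, ContDiff ℝ 1 (G i k))
    (k : Fin 3) : ContDiff ℝ 1 (fQ α κ U G k) := by
  unfold fQ fT; fun_prop

lemma fS_contDiff (κ : ℝ) (hU : ∀ i, ContDiff ℝ 1 (U i)) (k : Fin 3) :
    ContDiff ℝ 1 (fS κ U k) := by
  unfold fS; fun_prop

lemma norm_inv_pow_contDiffAt {x : E3} (hx : x ≠ 0) (m : ℕ) :
    ContDiffAt ℝ 1 (fun y : E3 => (‖y‖⁻¹) ^ m) x :=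
  ((contDiffAt_norm ℝ hx).inv (norm_ne_zero_iff.2 hx)).pow m

lemma fF_contDiffAt (α κ : ℝ) (hU : ∀ i, ContDiff ℝ 1 (U i))
    (hG : ∀ i k, ContDiff ℝ 1 (G i k)) (k : Fin 3) {x : E3} (hx : x ≠ 0) :
    ContDiffAt ℝ 1 (fF α κ U G k) x := by
  unfold fF
  exact (((norm_inv_pow_contDiffAt hx 1).mul (fP_contDiff α hU hG k).contDiffAt).add
    ((norm_inv_pow_contDiffAt hx 3).mul (fQ_contDiff α κ hU hG k).contDiffAt)).add
    ((norm_inv_pow_contDiffAt hx 5).mul (fS_contDiff κ hU k).contDiffAt)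

lemma pd_fF (α κ : ℝ) (hU : ∀ i, ContDiff ℝ 1 (U i))
    (hG : ∀ i k, ContDiff ℝ 1 (G i k)) (k : Fin 3) {x : E3} (hx : x ≠ 0) :
    pd k (fF α κ U G k) x =
      ‖x‖⁻¹ * pd k (fP α U G k) x - (‖x‖⁻¹) ^ 3 * (x k * fP α U G k x)
      + (‖x‖⁻¹) ^ 3 * pd k (fQ α κ U G k) x - 3 * (‖x‖⁻¹) ^ 5 * (x k * fQ α κ U G k x)
      + (‖x‖⁻¹) ^ 5 * pd k (fS κ U k) x - 5 * (‖x‖⁻¹) ^ 7 * (x k * fS κ U k x) := by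
  have d1 := (norm_inv_pow_contDiffAt hx 1).differentiableAt (by simp)
  have d3 := (norm_inv_pow_contDiffAt hx 3).differentiableAt (by simp)
  have d5 := (norm_inv_pow_contDiffAt hx 5).differentiableAt (by simp)
  have dP := (fP_contDiff α hU hG k).differentiable (by simp) x
  have dQ := (fQ_contDiff α κ hU hG k).differentiable (by simp) x
  have dS := (fS_contDiff κ hU k).differentiable (by simp) x
  unfold fF
  rw [pd_add k ((d1.fun_mul dP).fun_add (d3.fun_mul dQ)) (d5.fun_mul dS),
    pd_add k (d1.fun_mul dP) (d3.fun_mul dQ),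
    pd_mul k d1 dP, pd_mul k d3 dQ, pd_mul k d5 dS, pd_norm_inv_pow k 1 hx,
    pd_norm_inv_pow k 3 hx, pd_norm_inv_pow k 5 hx]
  push_cast
  ring

end Identity

/-! ### The divergence identity -/

section Identity2
variable {U : Fin 3 → E3 → ℝ} {G : Fin 3 → Fin 3 → E3 → ℝ}

/-- The first term on the right is `(Lu)·(Φu)/c_α`: the energy density equals `|x|⁻¹ W` plus a
divergence. The hypothesis `hκ` says `κ = α/(α+2)`. -/
lemma div_fF {α κ : ℝ} (hκ : κ * (α + 2) = α) (hU : ∀ i, ContDiff ℝ 1 (U i))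
    (hG : ∀ i k, ContDiff ℝ 1 (G i k)) {x : E3} (hx : x ≠ 0)
    (hUG : ∀ i k, pd k (U i) x = G i k x)
    (hsym : ∀ i k l, pd l (G i k) x = pd k (G i l) x) :
    ∑ k, pd k (fF α κ U G k) x =
      ‖x‖⁻¹ * (∑ i, (-(∑ k, pd k (G i k) x) - α * (∑ k, pd i (G k k) x)) *
        (U i x + κ * (‖x‖⁻¹ ^ 2 * x i * ∑ j, x j * U j x)))
      - ‖x‖⁻¹ * fW α κ (fun i k => G i k x) (fun i => ‖x‖⁻¹ * x i) := by
  have hm : (x 0 ^ 2 + x 1 ^ 2 + x 2 ^ 2) * (‖x‖⁻¹) ^ 2 = 1 := by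
    have h := EuclideanSpace.norm_sq_eq x
    simp only [Real.norm_eq_abs, sq_abs, Fin.sum_univ_three] at h
    rw [← h, ← mul_pow, mul_inv_cancel₀ (norm_ne_zero_iff.2 hx), one_pow]
  have hUd : ∀ i, DifferentiableAt ℝ (U i) x := fun i => (hU i).differentiable (by simp) x
  have hGd : ∀ i k, DifferentiableAt ℝ (G i k) x := fun i k => (hG i k).differentiable (by simp) x
  have hcd : ∀ i : Fin 3, DifferentiableAt ℝ (fun y : E3 => y i) x := fun i => by fun_prop
  have hP : ∀ k, pd k (fP α U G k) x = 
     -(pd k (G 0 k) x * U 0 x + G 0 k x * G 0 k x + (pd k (G 1 k) x * U 1 x + G 1 k x * G 1 k x)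
       + (pd k (G 2 k) x * U 2 x + G 2 k x * G 2 k x))
      - α * ((pd k (G 0 0) x + pd k (G 1 1) x + pd k (G 2 2) x) * U k x
      + (G 0 0 x + G 1 1 x + G 2 2 x) * G k k x) := by
    intro k
    unfold fP
    simp (disch := fun_prop) only [pd_add, pd_sub, pd_neg, pd_mul, pd_const, hUG]
    ring
  simp only [Fin.sum_univ_three, pd_fF α κ hU hG _ hx, hP]
  unfold fQ fS fT
  have e1 : ((0 : Fin 3) + 1 = 1) := rfl
  have e2 : ((0 : Fin 3) + 2 = 2) := rfl
  have e3 : ((1 : Fin 3) + 1 = 2) := rfl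
  have e4 : ((1 : Fin 3) + 2 = 0) := rfl
  have e5 : ((2 : Fin 3) + 1 = 0) := rfl
  have e6 : ((2 : Fin 3) + 2 = 1) := rfl
  have n1 : ¬ ((0 : Fin 3) = 1) := by decide
  have n2 : ¬ ((0 : Fin 3) = 2) := by decide
  have n3 : ¬ ((1 : Fin 3) = 0) := by decide
  have n4 : ¬ ((1 : Fin 3) = 2) := by decide
  have n5 : ¬ ((2 : Fin 3) = 0) := by decide
  have n6 : ¬ ((2 : Fin 3) = 1) := by decide
  simp (disch := fun_prop) only [pd_add, pd_sub, pd_neg, pd_mul, pd_const, pd_coord, hUG,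
    e1, e2, e3, e4, e5, e6, if_neg n1, if_neg n2, if_neg n3, if_neg n4, if_neg n5, if_neg n6,
    if_true]
  have s1 : ∀ i, pd 1 (G i 0) x = pd 0 (G i 1) x := fun i => hsym i 0 1
  have s2 : ∀ i, pd 2 (G i 0) x = pd 0 (G i 2) x := fun i => hsym i 0 2
  have s3 : ∀ i, pd 2 (G i 1) x = pd 1 (G i 2) x := fun i => hsym i 1 2
  unfold fP fW cofQ
  simp only [Fin.sum_univ_three, s1, s2, s3]
  generalize ‖x‖⁻¹ = m at *
  linear_combination (3 * m ^ 3 * (α * κ * (G 0 0 x + G 1 1 x + G 2 2 x)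
      * (x 0 * U 0 x + x 1 * U 1 x + x 2 * U 2 x)
      + 1 / 2 * (U 0 x * U 0 x + U 1 x * U 1 x + U 2 x * U 2 x))
      + 15 / 2 * κ * m ^ 5 * (x 0 * U 0 x + x 1 * U 1 x + x 2 * U 2 x) ^ 2) * hm
    - m ^ 3 * (G 0 0 x + G 1 1 x + G 2 2 x) * (x 0 * U 0 x + x 1 * U 1 x + x 2 * U 2 x) * hκ

end Identity2

/-! ### The energy identity -/

section Energy
variable {α : ℝ} {u : E3 → Fin 3 → ℝ}

/-- `α / (α + 2)`, the anisotropy coefficient of the fundamental matrix. -/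
def kap (α : ℝ) : ℝ := α / (α + 2)

/-- Polar density of the energy: `(Lu)·(Φu) = c_α |x|⁻² psiE(x, x/|x|)`. -/
def psiE (α : ℝ) (u : E3 → Fin 3 → ℝ) (x y : E3) : ℝ :=
  ‖x‖ * ∑ i, lame α u x i * (u x i + kap α * (y i * ∑ j, y j * u x j))

/-- Polar density of the quadratic form: `|x|⁻¹ W = |x|⁻² psiI(x, x/|x|)`. -/
def psiI (α : ℝ) (u : E3 → Fin 3 → ℝ) (x y : E3) : ℝ :=
  ‖x‖ * fW α (kap α) (fun i k => Gd u i k x) (fun i => y i)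

/-- Polar density of the flux of `fF`: `|x| (x · fF) = psiH(x, x/|x|)` for `x ≠ 0`. -/
def psiH (α : ℝ) (u : E3 → Fin 3 → ℝ) (x y : E3) : ℝ :=
  ‖x‖ * (∑ k, y k * fP α (fun i z => u z i) (Gd u) k x)
    - kap α * ‖x‖ * ((∑ i, ∑ k, y i * Gd u i k x * y k) * ∑ j, y j * u x j)
    - α * kap α * ‖x‖ * ((∑ i, Gd u i i x) * ∑ j, y j * u x j)
    - 1 / 2 * (∑ i, u x i * u x i) - 3 / 2 * kap α * (∑ j, y j * u x j) ^ 2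

lemma comp_contDiff (hu : ContDiff ℝ (⊤ : ℕ∞) u) (i : Fin 3) :
    ContDiff ℝ (⊤ : ℕ∞) (fun z => u z i) :=
  contDiff_pi.1 hu i

lemma Gd_contDiff (hu : ContDiff ℝ (⊤ : ℕ∞) u) (i k : Fin 3) :
    ContDiff ℝ (⊤ : ℕ∞) (Gd u i k) :=
  contDiff_pd (comp_contDiff hu i) k

lemma Gd_continuous (hu : ContDiff ℝ (⊤ : ℕ∞) u) (i k : Fin 3) : Continuous (Gd u i k) :=
  (Gd_contDiff hu i k).continuous

lemma lame_eq (hu : ContDiff ℝ (⊤ : ℕ∞) u) (x : E3) (i : Fin 3) :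
    lame α u x i = -(∑ k, pd k (Gd u i k) x) - α * ∑ k, pd i (Gd u k k) x := by
  have h : pd i (divg u) x = ∑ k, pd i (Gd u k k) x := by
    have e : divg u = fun x => Gd u 0 0 x + Gd u 1 1 x + Gd u 2 2 x := by
      ext z; simp [divg, Fin.sum_univ_three, Gd]
    have hd : ∀ k, DifferentiableAt ℝ (Gd u k k) x := fun k =>
      (Gd_contDiff hu k k).differentiable (by simp) x
    rw [e, pd_add i ((hd 0).fun_add (hd 1)) (hd 2), pd_add i (hd 0) (hd 1), Fin.sum_univ_three]
  rw [lame, h]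
  rfl

lemma lame_continuous (hu : ContDiff ℝ (⊤ : ℕ∞) u) (i : Fin 3) :
    Continuous fun x => lame α u x i := by
  simp only [lame_eq hu]
  have : ∀ l i k, Continuous (pd l (Gd u i k)) := fun l i k =>
    (contDiff_pd (Gd_contDiff hu i k) l).continuous
  fun_prop

lemma pd_eventually_zero {f : E3 → ℝ} {x : E3} (h : f =ᶠ[nhds x] fun _ => 0) (k : Fin 3) :
    pd k f =ᶠ[nhds x] fun _ => 0 := by
  filter_upwards [h.eventuallyEq_nhds] with y hy
  simp [pd, hy.fderiv_eq]

lemma exists_radius (hs : HasCompactSupport u) :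
    ∃ R : ℝ, ∀ x, R ≤ ‖x‖ → u =ᶠ[nhds x] 0 := by
  obtain ⟨R, hR⟩ := hs.isCompact.isBounded.subset_ball (0 : E3)
  refine ⟨R, fun x hx => notMem_tsupport_iff_eventuallyEq.1 fun h => ?_⟩
  have := hR h
  rw [mem_ball_zero_iff] at this
  linarith

lemma u_zero {x : E3} (h : u =ᶠ[nhds x] 0) (i : Fin 3) :
    (fun z => u z i) =ᶠ[nhds x] fun _ => 0 := by
  filter_upwards [h] with y hy
  simp [hy]

lemma Gd_zero {x : E3} (h : u =ᶠ[nhds x] 0) (i k : Fin 3) :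
    Gd u i k =ᶠ[nhds x] fun _ => 0 :=
  pd_eventually_zero (u_zero h i) k

/-- The boundary term `|u(0)|²/2` is the flux of `fF` through infinitesimal spheres; its value
follows from the second moments of the surface measure. -/
lemma energy_identity (hα₁ : -1 < α) (hu : ContDiff ℝ (⊤ : ℕ∞) u) (hs : HasCompactSupport u) :
    ∫ x : E3, ∑ i, ∑ j, lame α u x i * Phi α x i j * u x j =
      1 / 2 * (∑ i, (u 0 i) ^ 2) + cA α * ∫ r in Set.Ioi (0 : ℝ), sphJ (psiI α u) r := by
  obtain ⟨R, hR⟩ := exists_radius hs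
  have hκ : kap α * (α + 2) = α := by
    unfold kap; field_simp [show α + 2 ≠ 0 by linarith]
  have cu : ∀ i, Continuous fun z => u z i := fun i => (comp_contDiff hu i).continuous
  have cG := Gd_continuous hu
  have cL := lame_continuous (α := α) hu
  have u0 : ∀ x, R ≤ ‖x‖ → ∀ i, u x i = 0 := fun x hx i => (u_zero (hR x hx) i).eq_of_nhds
  have G0 : ∀ x, R ≤ ‖x‖ → ∀ i k, Gd u i k x = 0 := fun x hx i k =>
    (Gd_zero (hR x hx) i k).eq_of_nhds
  have hEc : Continuous fun p : E3 × E3 => psiE α u p.1 p.2 := by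
    unfold psiE; fun_prop
  have hIc : Continuous fun p : E3 × E3 => psiI α u p.1 p.2 := by
    unfold psiI fW cofQ; fun_prop
  have hHc : Continuous fun p : E3 × E3 => psiH α u p.1 p.2 := by
    unfold psiH fP; fun_prop
  have hER : ∀ x y, R ≤ ‖x‖ → psiE α u x y = 0 := fun x y hx => by
    simp [psiE, u0 x hx]
  have hIR : ∀ x y, R ≤ ‖x‖ → psiI α u x y = 0 := fun x y hx => by
    simp [psiI, fW, cofQ, G0 x hx]
  have hHR : ∀ x y, R ≤ ‖x‖ → psiH α u x y = 0 := fun x y hx => by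
    simp [psiH, fP, u0 x hx]
  have hU1 : ∀ i, ContDiff ℝ 1 (fun z => u z i) := fun i => (comp_contDiff hu i).of_le (by simp)
  have hG1 : ∀ i k, ContDiff ℝ 1 (Gd u i k) := fun i k => (Gd_contDiff hu i k).of_le (by simp)
  have hdiv : ∀ x : E3, x ≠ 0 → ∑ k, pd k (fF α (kap α) (fun i z => u z i) (Gd u) k) x =
      (‖x‖⁻¹) ^ 2 * psiE α u x (‖x‖⁻¹ • x) - (‖x‖⁻¹) ^ 2 * psiI α u x (‖x‖⁻¹ • x) := by
    intro x hx
    rw [div_fF hκ hU1 hG1 hx (fun i k => rfl)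
      (fun i k l => pd_comm (comp_contDiff hu i) k l x)]
    have hn : ‖x‖⁻¹ * ‖x‖ = 1 := inv_mul_cancel₀ (norm_ne_zero_iff.2 hx)
    simp only [psiE, psiI, lame_eq hu, PiLp.smul_apply, smul_eq_mul]
    generalize fW α (kap α) _ _ = W
    simp only [Fin.sum_univ_three]
    generalize ‖x‖⁻¹ = m at *
    generalize ‖x‖ = n at *
    obtain rfl | hm := eq_or_ne m 0
    · simp at hn
    obtain rfl : n = m⁻¹ := by field_simp; linarith
    field_simp
  have hae : (fun x : E3 => (‖x‖⁻¹) ^ 2 * psiE α u x (‖x‖⁻¹ • x)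
      - (‖x‖⁻¹) ^ 2 * psiI α u x (‖x‖⁻¹ • x)) =ᵐ[volume]
      fun x => ∑ k, pd k (fF α (kap α) (fun i z => u z i) (Gd u) k) x := by
    filter_upwards [Measure.ae_ne volume (0 : E3)] with x hx
    exact (hdiv x hx).symm
  have iE := polar_integrable hEc hER
  have iI := polar_integrable hIc hIR
  have key := div_singular (F := fF α (kap α) (fun i z => u z i) (Gd u)) (Ψ := psiH α u) (R := R)
    (fun k x hx => fF_contDiffAt α (kap α) hU1 hG1 k hx)
    (fun k x hx => by
      simp [fF, fP, fQ, fS, fT, u0 x hx, G0 x hx])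
    hHc hHR
    (fun x hx => by
      have hn : ‖x‖ * ‖x‖⁻¹ = 1 := mul_inv_cancel₀ (norm_ne_zero_iff.2 hx)
      have hm : (x 0 ^ 2 + x 1 ^ 2 + x 2 ^ 2) * (‖x‖⁻¹) ^ 2 = 1 := by
        have h := EuclideanSpace.norm_sq_eq x
        simp only [Real.norm_eq_abs, sq_abs, Fin.sum_univ_three] at h
        rw [← h, ← mul_pow, mul_inv_cancel₀ (norm_ne_zero_iff.2 hx), one_pow]
      simp only [psiH, fF, fQ, fS, PiLp.smul_apply, smul_eq_mul, Fin.sum_univ_three]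
      have e1 : ((0 : Fin 3) + 1 = 1) := rfl
      have e2 : ((0 : Fin 3) + 2 = 2) := rfl
      have e3 : ((1 : Fin 3) + 1 = 2) := rfl
      have e4 : ((1 : Fin 3) + 2 = 0) := rfl
      have e5 : ((2 : Fin 3) + 1 = 0) := rfl
      have e6 : ((2 : Fin 3) + 2 = 1) := rfl
      simp only [e1, e2, e3, e4, e5, e6]
      generalize ‖x‖⁻¹ = m at *
      generalize ‖x‖ = n at *
      linear_combination (-(α * kap α * n * m * (Gd u 0 0 x + Gd u 1 1 x + Gd u 2 2 x)
          * (x 0 * u x 0 + x 1 * u x 1 + x 2 * u x 2))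
          - 1 / 2 * n * m * (u x 0 * u x 0 + u x 1 * u x 1 + u x 2 * u x 2)
          - 3 / 2 * kap α * n * m ^ 3 * (x 0 * u x 0 + x 1 * u x 1 + x 2 * u x 2) ^ 2) * hm
        + (- 1 / 2 * (u x 0 * u x 0 + u x 1 * u x 1 + u x 2 * u x 2)
          - 3 / 2 * kap α * m ^ 2 * (x 0 * u x 0 + x 1 * u x 1 + x 2 * u x 2) ^ 2) * hn)
    ((iE.sub iI).congr hae)
  rw [← integral_congr_ae hae, integral_sub iE iI, polar_integral hIc hIR] at key
  have hpt : (fun x : E3 => ∑ i, ∑ j, lame α u x i * Phi α x i j * u x j) =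
      fun x => cA α * ((‖x‖⁻¹) ^ 2 * psiE α u x (‖x‖⁻¹ • x)) := by
    ext x
    have hn : (‖x‖⁻¹) ^ 2 * ‖x‖ = ‖x‖⁻¹ := by
      rcases eq_or_ne ‖x‖ 0 with h | h
      · simp [h]
      · field_simp
    simp only [psiE, Phi, PiLp.smul_apply, smul_eq_mul]
    rw [← mul_assoc ((‖x‖⁻¹) ^ 2), hn]
    simp only [Fin.sum_univ_three, kap, Fin.isValue, div_eq_mul_inv, ← inv_pow]
    simp
    ring
  have hH0 : sphJ (psiH α u) 0 = -(2 * Real.pi * (1 + kap α) * ∑ i, (u 0 i) ^ 2) := by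
    have e : ∀ ω : sphere (0 : E3) 1, psiH α u ((0 : ℝ) • (ω : E3)) (ω : E3) =
        -(1 / 2 * ∑ i, (u 0 i) ^ 2) - 3 / 2 * kap α *
          ∑ i, ∑ j, u 0 i * u 0 j * ((ω : E3) i * (ω : E3) j) := by
      intro ω
      simp only [psiH, zero_smul, norm_zero, Fin.sum_univ_three]
      ring
    unfold sphJ
    simp_rw [e]
    have hi : ∀ i j : Fin 3, Integrable (fun ω : sphere (0 : E3) 1 =>
        u 0 i * u 0 j * ((ω : E3) i * (ω : E3) j)) sphMeas := fun i j =>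
      sphere_integrable (f := fun y => u 0 i * u 0 j * (y i * y j)) (by fun_prop)
    rw [integral_sub (integrable_const _) ((integrable_finsetSum _ fun i _ =>
      integrable_finsetSum _ fun j _ => hi i j).const_mul _), integral_const, integral_const_mul,
      integral_finsetSum _ fun i _ => integrable_finsetSum _ fun j _ => hi i j]
    simp_rw [integral_finsetSum _ fun j _ => hi _ j, integral_const_mul, sphere_moment]
    rw [sphMeas_real_univ]
    simp [Fin.sum_univ_three]
    ring
  rw [hpt, integral_const_mul]
  rw [hH0] at key
  have hc : cA α * (2 * Real.pi * (1 + kap α)) = 1 / 2 := by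
    have h1 : α + 1 ≠ 0 := by linarith
    have h2 : α + 2 ≠ 0 := by linarith
    unfold cA kap
    field_simp
    ring
  linear_combination cA α * key + (∑ i, (u 0 i) ^ 2) * hc

end Energy

/-! ### Pointwise lower bound for the quadratic form -/

section Pointwise

lemma cs3 {y0 y1 y2 : ℝ} (hy : y0 ^ 2 + y1 ^ 2 + y2 ^ 2 = 1) (a b c : ℝ) :
    (y0 * a + y1 * b + y2 * c) ^ 2 ≤ a ^ 2 + b ^ 2 + c ^ 2 := by
  have e : a ^ 2 + b ^ 2 + c ^ 2 = (y0 ^ 2 + y1 ^ 2 + y2 ^ 2) * (a ^ 2 + b ^ 2 + c ^ 2) := by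
    rw [hy, one_mul]
  rw [e]
  nlinarith [sq_nonneg (y0 * b - y1 * a), sq_nonneg (y0 * c - y2 * a),
    sq_nonneg (y1 * c - y2 * b)]

/-- With `Aᵢ = y × Gᵢ` for the rows `Gᵢ` of `G`, the difference of the two sides is
`(tr A)² + |A - Aᵀ|²/2`. -/
lemma cof_lower (G : Fin 3 → Fin 3 → ℝ) (y : Fin 3 → ℝ) :
    (∑ i, (∑ k, G i k * y k) ^ 2) - (∑ k, y k ^ 2) * ∑ i, ∑ k, G i k ^ 2 ≤ 2 * cofQ G y := by
  let A : Fin 3 → Fin 3 → ℝ := fun i =>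
    ![y 1 * G i 2 - y 2 * G i 1, y 2 * G i 0 - y 0 * G i 2, y 0 * G i 1 - y 1 * G i 0]
  have key : 2 * cofQ G y + (∑ k, y k ^ 2) * (∑ i, ∑ k, G i k ^ 2)
      - ∑ i, (∑ k, G i k * y k) ^ 2 = (A 0 0 + A 1 1 + A 2 2) ^ 2
        + (A 0 1 - A 1 0) ^ 2 + (A 0 2 - A 2 0) ^ 2 + (A 1 2 - A 2 1) ^ 2 := by
    simp only [A, cofQ, Fin.sum_univ_three, Matrix.cons_val_zero, Matrix.cons_val_one,
      Matrix.cons_val]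
    ring
  have : 0 ≤ (A 0 0 + A 1 1 + A 2 2) ^ 2
        + (A 0 1 - A 1 0) ^ 2 + (A 0 2 - A 2 0) ^ 2 + (A 1 2 - A 2 1) ^ 2 := by positivity
  linarith

lemma Bminus_00 (α : ℝ) : Bminus α 0 0 = 1 + (α / 3) * ((2 * α + 3) / (α + 2)) := rfl
lemma Bminus_01 (α : ℝ) : Bminus α 0 1 =
    (α / 2) * ((3 * α + 4) / (α + 2)) + α / (2 * Real.sqrt 3) := rfl
lemma Bminus_10 (α : ℝ) : Bminus α 1 0 =
    (α / 2) * ((3 * α + 4) / (α + 2)) + α / (2 * Real.sqrt 3) := rfl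
lemma Bminus_11 (α : ℝ) : Bminus α 1 1 =
    1 + 3 * α + (α / (α + 2)) * (1 + (1 + Real.sqrt 3) / Real.sqrt 2 - Real.sqrt 3 * α) := rfl

lemma Bminus_01_nonpos {α : ℝ} (hα₁ : -1 < α) (hα₂ : α < 0) : Bminus α 0 1 ≤ 0 := by
  rw [Bminus_01]
  have h1 : 0 < (3 * α + 4) / (α + 2) := div_pos (by linarith) (by linarith)
  have h2 : α / (2 * Real.sqrt 3) ≤ 0 := div_nonpos_of_nonpos_of_nonneg hα₂.le (by positivity)
  nlinarith

set_option maxHeartbeats 400000 in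
/-- Pointwise lower bound for `W` at `G = a ⊗ y + H` with `|y| = 1` and `h = |H|`. It uses
`|tr H| ≤ √3 h`, `|yᵀH| ≤ h`, `|yᵀHy| ≤ h`, the cofactor bound, and `(1 + √3)/√2 ≥ 1`. -/
lemma fW_lower {α : ℝ} (hα₁ : -1 < α) (hα₂ : α < 0) (a y : Fin 3 → ℝ) (H : Fin 3 → Fin 3 → ℝ)
    (hy : ∑ k, y k ^ 2 = 1) {h : ℝ} (h0 : 0 ≤ h) (hh : h ^ 2 = ∑ i, ∑ k, H i k ^ 2) :
    (∑ i, a i ^ 2) + 2 * (∑ i, a i * ∑ k, H i k * y k)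
      + 3 * (Bminus α 0 0 - 1) * (∑ i, a i * y i) ^ 2
      + 2 * Real.sqrt 3 * Bminus α 0 1 * (|∑ i, a i * y i| * h) + Bminus α 1 1 * h ^ 2
      ≤ fW α (kap α) (fun i k => a i * y k + H i k) y := by
  have hκ : kap α * (α + 2) = α := by
    unfold kap; field_simp [show α + 2 ≠ 0 by linarith]
  have hκ0 : kap α < 0 := div_neg_of_neg_of_pos hα₂ (by linarith)
  set κ := kap α with hk
  set p := ∑ i, a i * y i with hp
  set t := ∑ i, H i i with ht
  set z : Fin 3 → ℝ := fun k => ∑ i, y i * H i k with hz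
  set q := ∑ k, y k * z k with hq
  set g : Fin 3 → ℝ := fun i => ∑ k, H i k * y k with hg
  have hy' : y 0 ^ 2 + y 1 ^ 2 + y 2 ^ 2 = 1 := by rw [← hy, Fin.sum_univ_three]
  have s3 : Real.sqrt 3 ^ 2 = 3 := Real.sq_sqrt (by norm_num)
  have s3p : 0 < Real.sqrt 3 := by positivity
  have zle : ∑ k, z k ^ 2 ≤ h ^ 2 := by
    rw [hh]
    simp only [hz, Fin.sum_univ_three]
    linarith [cs3 hy' (H 0 0) (H 1 0) (H 2 0), cs3 hy' (H 0 1) (H 1 1) (H 2 1),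
      cs3 hy' (H 0 2) (H 1 2) (H 2 2)]
  have qle : |q| ≤ h := by
    refine abs_le_of_sq_le_sq ?_ h0
    refine le_trans ?_ zle
    simp only [hq, Fin.sum_univ_three]
    exact cs3 hy' _ _ _
  have tle : |t| ≤ Real.sqrt 3 * h := by
    refine abs_le_of_sq_le_sq ?_ (by positivity)
    rw [mul_pow, s3, hh]
    simp only [ht, Fin.sum_univ_three]
    nlinarith [sq_nonneg (H 0 0 - H 1 1), sq_nonneg (H 0 0 - H 2 2), sq_nonneg (H 1 1 - H 2 2),
      sq_nonneg (H 0 1), sq_nonneg (H 0 2), sq_nonneg (H 1 0), sq_nonneg (H 1 2),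
      sq_nonneg (H 2 0), sq_nonneg (H 2 1)]
  have cle : - h ^ 2 ≤ 2 * cofQ (fun i k => a i * y k + H i k) y := by
    have h1 := cof_lower (fun i k => a i * y k + H i k) y
    have h2 : (∑ i, (∑ k, (a i * y k + H i k) * y k) ^ 2)
        - (∑ k, y k ^ 2) * ∑ i, ∑ k, (a i * y k + H i k) ^ 2 = (∑ i, g i ^ 2) - h ^ 2 := by
      rw [hh, hy]
      simp only [hg, Fin.sum_univ_three]
      have : ∀ a u v w : ℝ, ((a * y 0 + u) * y 0 + (a * y 1 + v) * y 1 + (a * y 2 + w) * y 2) ^ 2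
          - ((a * y 0 + u) ^ 2 + (a * y 1 + v) ^ 2 + (a * y 2 + w) ^ 2)
          = (u * y 0 + v * y 1 + w * y 2) ^ 2 - (u ^ 2 + v ^ 2 + w ^ 2) := by
        intro a u v w
        linear_combination (a ^ 2 * (y 0 ^ 2 + y 1 ^ 2 + y 2 ^ 2)
          + 2 * a * (u * y 0 + v * y 1 + w * y 2)) * hy'
      linear_combination this (a 0) (H 0 0) (H 0 1) (H 0 2) + this (a 1) (H 1 0) (H 1 1) (H 1 2)
        + this (a 2) (H 2 0) (H 2 1) (H 2 2)
    have h3 : 0 ≤ ∑ i, g i ^ 2 := Finset.sum_nonneg fun i _ => sq_nonneg _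
    linarith
  have hW : fW α κ (fun i k => a i * y k + H i k) y =
      (∑ i, a i ^ 2) + 2 * (∑ i, a i * g i) + h ^ 2
      + κ * (p ^ 2 + 2 * p * q + ∑ k, z k ^ 2) + α * (p + t) ^ 2
      + α * κ * ((p + t) * (p + q)) - κ * (2 * cofQ (fun i k => a i * y k + H i k) y) := by
    unfold fW
    generalize cofQ _ _ = C
    rw [hh]
    simp only [hp, ht, hq, hz, hg, Fin.sum_univ_three]
    linear_combination (a 0 ^ 2 + a 1 ^ 2 + a 2 ^ 2
      + κ * (a 0 * y 0 + a 1 * y 1 + a 2 * y 2) ^ 2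
      + α * κ * (a 0 * y 0 + a 1 * y 1 + a 2 * y 2 + (H 0 0 + H 1 1 + H 2 2))
        * (a 0 * y 0 + a 1 * y 1 + a 2 * y 2)) * hy'
  have hB1 : 3 * (Bminus α 0 0 - 1) = κ + α + α * κ := by
    rw [Bminus_00, hk]; unfold kap; field_simp [show α + 2 ≠ 0 by linarith]; ring
  have hB2 : 2 * Real.sqrt 3 * Bminus α 0 1 = α + Real.sqrt 3 * (2 * α + α * κ) := by
    have : α + 2 ≠ 0 := by linarith
    rw [Bminus_01, hk]; unfold kap; field_simp; ring
  have hB3 : Bminus α 1 1 ≤ 1 + 3 * α + 2 * κ - Real.sqrt 3 * (α * κ) := by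
    rw [Bminus_11]
    change 1 + 3 * α + κ * _ ≤ _
    have s2 : Real.sqrt 2 ≤ Real.sqrt 3 := Real.sqrt_le_sqrt (by norm_num)
    have : 1 ≤ (1 + Real.sqrt 3) / Real.sqrt 2 := by
      rw [le_div_iff₀ (by positivity)]; linarith
    nlinarith only [mul_le_mul_of_nonpos_left this hκ0.le]
  have hακ : 0 < α * κ := mul_pos_of_neg_of_neg hα₂ hκ0
  have i1 : α * (|p| * h) ≤ α * (p * q) := by
    refine mul_le_mul_of_nonpos_left ?_ hα₂.le
    calc p * q ≤ |p| * |q| := by rw [← abs_mul]; exact le_abs_self _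
      _ ≤ |p| * h := by gcongr
  have i2 : (2 * α + α * κ) * (|p| * (Real.sqrt 3 * h)) ≤ (2 * α + α * κ) * (p * t) := by
    refine mul_le_mul_of_nonpos_left ?_ ?_
    · calc p * t ≤ |p| * |t| := by rw [← abs_mul]; exact le_abs_self _
        _ ≤ |p| * (Real.sqrt 3 * h) := by gcongr
    · have h2 : -2 < κ := by
        rw [hk, kap, lt_div_iff₀ (by linarith)]; linarith
      rw [show 2 * α + α * κ = α * (2 + κ) by ring]
      exact mul_nonpos_of_nonpos_of_nonneg hα₂.le (by linarith)
  have i3 : - (α * κ * (Real.sqrt 3 * h * h)) ≤ α * κ * (t * q) := by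
    rw [← mul_neg]
    refine mul_le_mul_of_nonneg_left ?_ hακ.le
    have : |t * q| ≤ Real.sqrt 3 * h * h := by rw [abs_mul]; gcongr
    exact (abs_le.1 this).1
  have i4 : α * (3 * h ^ 2) ≤ α * t ^ 2 := by
    refine mul_le_mul_of_nonpos_left ?_ hα₂.le
    rw [← s3, ← mul_pow, ← sq_abs]
    gcongr
  have i5 : κ * h ^ 2 ≤ κ * ∑ k, z k ^ 2 := mul_le_mul_of_nonpos_left zle hκ0.le
  have i6 : κ * (2 * cofQ (fun i k => a i * y k + H i k) y) ≤ κ * (- h ^ 2) :=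
    mul_le_mul_of_nonpos_left cle hκ0.le
  have i7 : Bminus α 1 1 * h ^ 2 ≤ (1 + 3 * α + 2 * κ - Real.sqrt 3 * (α * κ)) * h ^ 2 := by
    gcongr
  rw [hW, hB1, hB2]
  have e : α * (p * q) = 2 * κ * (p * q) + α * κ * (p * q) := by
    linear_combination -(p * q) * hκ
  linarith

end Pointwise

/-! ### Spherical means and the inequality on a sphere -/

section SphericalMean
variable {u : E3 → Fin 3 → ℝ}

lemma fderiv_eq_sum_pd (f : E3 → ℝ) (x y : E3) :
    fderiv ℝ f x y = ∑ k, pd k f x * y k := by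
  have h : y = ∑ k, y k • (EuclideanSpace.single k (1 : ℝ) : E3) := by
    ext i; fin_cases i <;> simp [Fin.sum_univ_three]
  conv_lhs => rw [h]
  simp [map_sum, pd, mul_comm]

/-- The radial derivative of the spherical mean of `uᵢ`. -/
def meanD (u : E3 → Fin 3 → ℝ) (i : Fin 3) (r : ℝ) : ℝ :=
  (1 / (4 * Real.pi)) * sphJ (fun x y => ∑ k, Gd u i k x * y k) r

lemma meanD_continuous (hu : ContDiff ℝ (⊤ : ℕ∞) u) (i : Fin 3) : Continuous (meanD u i) := by
  have cG := Gd_continuous hu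
  unfold meanD
  exact continuous_const.mul (sphJ_continuous (by fun_prop))

lemma sphInt_hasDerivAt (hu : ContDiff ℝ (⊤ : ℕ∞) u) (i : Fin 3) (r : ℝ) :
    HasDerivAt (sphInt (fun x => u x i)) (sphJ (fun x y => ∑ k, Gd u i k x * y k) r) r := by
  have cG := Gd_continuous hu
  have cu : Continuous fun z => u z i := (comp_contDiff hu i).continuous
  have cD : Continuous fun p : ℝ × E3 => ∑ k, Gd u i k (p.1 • p.2) * p.2 k := by fun_prop
  obtain ⟨C, hC⟩ : ∃ C, ∀ p ∈ (closedBall r 1 ×ˢ sphere (0 : E3) 1),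
      ‖∑ k, Gd u i k (p.1 • p.2) * p.2 k‖ ≤ C :=
    ((isCompact_closedBall _ _).prod (isCompact_sphere _ _)).exists_bound_of_continuousOn
      cD.continuousOn
  refine (hasDerivAt_integral_of_dominated_loc_of_deriv_le
    (F := fun (s : ℝ) (ω : sphere (0 : E3) 1) => u (s • (ω : E3)) i)
    (F' := fun (s : ℝ) (ω : sphere (0 : E3) 1) => ∑ k, Gd u i k (s • (ω : E3)) * (ω : E3) k)
    (bound := fun _ => C) (closedBall_mem_nhds r one_pos) ?_ ?_ ?_ ?_ ?_ ?_).2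
  · exact Eventually.of_forall fun s =>
      (sphere_integrable (f := fun y => u (s • y) i) (by fun_prop)).aestronglyMeasurable
  · exact sphere_integrable (f := fun y => u (r • y) i) (by fun_prop)
  · exact (sphere_integrable (f := fun y => ∑ k, Gd u i k (r • y) * y k)
      (by fun_prop)).aestronglyMeasurable
  · exact Eventually.of_forall fun ω s hs => hC (s, ω) ⟨hs, ω.2⟩
  · exact integrable_const C
  · refine Eventually.of_forall fun ω s _ => ?_
    have h1 : HasFDerivAt (fun z => u z i) _ (s • (ω : E3)) :=
      ((comp_contDiff hu i).differentiable (by simp) _).hasFDerivAt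
    have h2 : HasDerivAt (fun s : ℝ => s • (ω : E3)) (ω : E3) s := by
      simpa using (hasDerivAt_id s).smul_const (ω : E3)
    have h3 := h1.comp_hasDerivAt s h2
    rw [fderiv_eq_sum_pd] at h3
    exact h3

lemma ub_hasDerivAt {ub : Fin 3 → ℝ → ℝ} {v : E3 → Fin 3 → ℝ} (hu : ContDiff ℝ (⊤ : ℕ∞) u)
    (hdec : IsSphericalMeanDecomp u ub v) (i : Fin 3) (r : ℝ) :
    HasDerivAt (ub i) (meanD u i r) r := by
  have : ub i = fun r => (1 / (4 * Real.pi)) * sphInt (fun x => u x i) r := by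
    ext r; exact hdec.1 i r
  rw [this]
  exact (sphInt_hasDerivAt hu i r).const_mul _

lemma pd_v {ub : Fin 3 → ℝ → ℝ} {v : E3 → Fin 3 → ℝ} (hu : ContDiff ℝ (⊤ : ℕ∞) u)
    (hdec : IsSphericalMeanDecomp u ub v) (i k : Fin 3) {r : ℝ} (hr : 0 < r)
    (ω : sphere (0 : E3) 1) :
    pd k (fun z => v z i) (r • (ω : E3)) =
      Gd u i k (r • (ω : E3)) - meanD u i r * (ω : E3) k := by
  have hv : (fun z => v z i) = fun z => u z i - ub i ‖z‖ := by
    ext z; linarith [hdec.2 z i]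
  have hn : ‖r • (ω : E3)‖ = r := by simp [norm_smul, abs_of_pos hr]
  have hx : r • (ω : E3) ≠ 0 := by
    rw [← norm_ne_zero_iff, hn]; exact hr.ne'
  have hd : DifferentiableAt ℝ (fun y : E3 => ‖y‖) (r • (ω : E3)) :=
    (contDiffAt_norm ℝ hx (n := 1)).differentiableAt (by simp)
  have h1 := (ub_hasDerivAt hu hdec i ‖r • (ω : E3)‖).comp_hasFDerivAt _ hd.hasFDerivAt
  have h2 : pd k (fun z => ub i ‖z‖) (r • (ω : E3)) = meanD u i r * (ω : E3) k := by
    have h3 := congrArg (fun L : E3 →L[ℝ] ℝ => L (EuclideanSpace.single k 1)) h1.fderiv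
    have h4 := pd_norm hx k
    unfold pd at h4 ⊢
    refine Eq.trans h3 ?_
    simp only [smul_apply, smul_eq_mul, h4, hn, PiLp.smul_apply]
    field_simp
  rw [hv, pd_sub k (g := fun z => ub i ‖z‖) ((comp_contDiff hu i).differentiable (by simp) _)
    h1.differentiableAt, h2]
  rfl

lemma sphere_cauchy_schwarz {f g : E3 → ℝ} (hf : Continuous f) (hg : Continuous g) :
    ∫ ω : sphere (0 : E3) 1, f ω * g ω ∂sphMeas ≤
      Real.sqrt (∫ ω : sphere (0 : E3) 1, f ω ^ 2 ∂sphMeas) *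
        Real.sqrt (∫ ω : sphere (0 : E3) 1, g ω ^ 2 ∂sphMeas) := by
  set A := ∫ ω : sphere (0 : E3) 1, f ω ^ 2 ∂sphMeas with hA
  set B := ∫ ω : sphere (0 : E3) 1, g ω ^ 2 ∂sphMeas with hB
  set M := ∫ ω : sphere (0 : E3) 1, f ω * g ω ∂sphMeas with hM
  have hA0 : 0 ≤ A := integral_nonneg fun ω => sq_nonneg _
  have hq : ∀ t : ℝ, 0 ≤ A * (t * t) + 2 * M * t + B := by
    intro t
    have e : ∫ ω : sphere (0 : E3) 1, (t * f ω + g ω) ^ 2 ∂sphMeas =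
        A * (t * t) + 2 * M * t + B := by
      have e1 : ∀ ω : sphere (0 : E3) 1, (t * f ω + g ω) ^ 2 =
          (t * t) * f ω ^ 2 + 2 * t * (f ω * g ω) + g ω ^ 2 := fun ω => by ring
      simp_rw [e1]
      have i1 := sphere_integrable (f := fun y => (t * t) * f y ^ 2) (by fun_prop)
      have i2 := sphere_integrable (f := fun y => 2 * t * (f y * g y)) (by fun_prop)
      have i3 := sphere_integrable (f := fun y => g y ^ 2) (by fun_prop)
      rw [integral_add (i1.fun_add i2) i3, integral_add i1 i2, integral_const_mul,
        integral_const_mul]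
      ring
    rw [← e]
    exact integral_nonneg fun ω => sq_nonneg _
  have hd := discrim_le_zero hq
  rw [discrim] at hd
  rw [← Real.sqrt_mul hA0]
  exact Real.le_sqrt_of_sq_le (by linarith)

/-- `∫_{S²} |D v|² dσ` at radius `r`, written through `Du` and the mean derivative. -/
def devSq (u : E3 → Fin 3 → ℝ) (r : ℝ) : ℝ :=
  ∫ ω : sphere (0 : E3) 1,
    ∑ i, ∑ k, (Gd u i k (r • (ω : E3)) - meanD u i r * (ω : E3) k) ^ 2 ∂sphMeas

lemma devSq_continuous (hu : ContDiff ℝ (⊤ : ℕ∞) u) : Continuous (devSq u) := by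
  have cG := Gd_continuous hu
  have cm := meanD_continuous hu
  have := continuous_parametric_integral_of_continuous (μ := sphMeas)
    (f := fun (r : ℝ) (ω : sphere (0 : E3) 1) =>
      ∑ i, ∑ k, (Gd u i k (r • (ω : E3)) - meanD u i r * (ω : E3) k) ^ 2)
    (by fun_prop) (s := Set.univ) isCompact_univ
  unfold devSq
  simpa using this

lemma sphere_const (c : ℝ) : ∫ _ω : sphere (0 : E3) 1, c ∂sphMeas = 4 * Real.pi * c := by
  rw [integral_const, sphMeas_real_univ, smul_eq_mul]

lemma sphere_linear_sq (a : Fin 3 → ℝ) :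
    ∫ ω : sphere (0 : E3) 1, (∑ i, a i * (ω : E3) i) ^ 2 ∂sphMeas =
      4 * Real.pi / 3 * ∑ i, a i ^ 2 := by
  have e : ∀ ω : sphere (0 : E3) 1, (∑ i, a i * (ω : E3) i) ^ 2 =
      ∑ i, ∑ j, a i * a j * ((ω : E3) i * (ω : E3) j) := by
    intro ω
    simp only [Fin.sum_univ_three]
    ring
  simp_rw [e]
  have hi : ∀ i j : Fin 3, Integrable (fun ω : sphere (0 : E3) 1 =>
      a i * a j * ((ω : E3) i * (ω : E3) j)) sphMeas := fun i j =>
    sphere_integrable (f := fun y => a i * a j * (y i * y j)) (by fun_prop)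
  rw [integral_finsetSum _ fun i _ => integrable_finsetSum _ fun j _ => hi i j]
  simp_rw [integral_finsetSum _ fun j _ => hi _ j, integral_const_mul, sphere_moment]
  simp [Fin.sum_univ_three]
  ring

/-- The inequality on a single sphere. Here `a = D_r ū` is constant on the sphere, `H = Dv` and
`Du = a ⊗ ω + H`; the cross term of `|Du|²` drops out because `Hω = D_r v` has mean zero. -/
lemma radial_bound {α : ℝ} (hα₁ : -1 < α) (hα₂ : α < 0) (hu : ContDiff ℝ (⊤ : ℕ∞) u)
    {r w0 w1 : ℝ} (hr : 0 < r)
    (hw0 : w0 = Real.sqrt (4 * Real.pi * ∑ i, meanD u i r ^ 2))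
    (hw1 : w1 = Real.sqrt (devSq u r)) :
    r * (w0 * Bminus α 0 0 * w0 + 2 * (Bminus α 0 1 * (w0 * w1)) + w1 * Bminus α 1 1 * w1)
      ≤ sphJ (psiI α u) r := by
  have cG := Gd_continuous hu
  set a : Fin 3 → ℝ := fun i => meanD u i r with ha
  let H : E3 → Fin 3 → Fin 3 → ℝ := fun y i k => Gd u i k (r • y) - a i * y k
  let h : E3 → ℝ := fun y => Real.sqrt (∑ i, ∑ k, H y i k ^ 2)
  let p : E3 → ℝ := fun y => ∑ i, a i * y i
  have cH : ∀ i k, Continuous fun y => H y i k := fun i k => by fun_prop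
  have ch : Continuous h := by fun_prop
  have cp : Continuous p := by fun_prop
  have hsq : ∀ y, h y ^ 2 = ∑ i, ∑ k, H y i k ^ 2 := fun y =>
    Real.sq_sqrt (Finset.sum_nonneg fun i _ => Finset.sum_nonneg fun k _ => sq_nonneg _)
  have pw0 : w0 ^ 2 = 4 * Real.pi * ∑ i, a i ^ 2 := by
    rw [hw0]; exact Real.sq_sqrt (by positivity)
  have pw1 : w1 ^ 2 = ∫ ω : sphere (0 : E3) 1, h ω ^ 2 ∂sphMeas := by
    have hd : 0 ≤ devSq u r := integral_nonneg fun ω =>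
      Finset.sum_nonneg fun i _ => Finset.sum_nonneg fun k _ => sq_nonneg _
    rw [hw1, Real.sq_sqrt hd]
    simp only [hsq, devSq, H, ha]
  have w0n : 0 ≤ w0 := hw0 ▸ Real.sqrt_nonneg _
  have w1n : 0 ≤ w1 := hw1 ▸ Real.sqrt_nonneg _
  have hcs : ∫ ω : sphere (0 : E3) 1, |p ω| * h ω ∂sphMeas ≤ w0 / Real.sqrt 3 * w1 := by
    refine (sphere_cauchy_schwarz (f := fun y => |p y|) cp.abs ch).trans_eq ?_
    simp only [sq_abs]
    rw [← pw1, Real.sqrt_sq w1n, sphere_linear_sq]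
    congr 1
    rw [hw0, ← Real.sqrt_div (by positivity)]
    congr 1
    ring
  have hmean : ∀ i, ∫ ω : sphere (0 : E3) 1, ∑ k, H ω i k * (ω : E3) k ∂sphMeas = 0 := by
    intro i
    have e : ∀ ω : sphere (0 : E3) 1, ∑ k, H ω i k * (ω : E3) k =
        (∑ k, Gd u i k (r • (ω : E3)) * (ω : E3) k) - a i := by
      intro ω
      simp only [H, Fin.sum_univ_three]
      linear_combination - a i * sphere_sq_sum ω
    simp_rw [e]
    rw [integral_sub (sphere_integrable (f := fun y => ∑ k, Gd u i k (r • y) * y k)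
      (by fun_prop)) (integrable_const _), sphere_const]
    simp only [ha, meanD]
    unfold sphJ
    field_simp
    ring
  have hI : sphJ (psiI α u) r = r * ∫ ω : sphere (0 : E3) 1,
      fW α (kap α) (fun i k => a i * (ω : E3) k + H ω i k) (fun i => (ω : E3) i) ∂sphMeas := by
    unfold sphJ
    rw [← integral_const_mul]
    congr 1
    ext ω
    simp [psiI, norm_smul, abs_of_pos hr, H]
  rw [hI]
  refine mul_le_mul_of_nonneg_left ?_ hr.le
  have i1 := sphere_integrable (f := fun _ => ∑ i, a i ^ 2) (by fun_prop)
  have i2 := sphere_integrable (f := fun y => 2 * ∑ i, a i * ∑ k, H y i k * y k) (by fun_prop)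
  have i3 := sphere_integrable (f := fun y => 3 * (Bminus α 0 0 - 1) * p y ^ 2) (by fun_prop)
  have i4 := sphere_integrable
    (f := fun y => 2 * Real.sqrt 3 * Bminus α 0 1 * (|p y| * h y)) (by fun_prop)
  have i5 := sphere_integrable (f := fun y => Bminus α 1 1 * h y ^ 2) (by fun_prop)
  have iW := sphere_integrable (f := fun y =>
      fW α (kap α) (fun i k => a i * y k + H y i k) (fun i => y i))
      (by unfold fW cofQ; fun_prop)
  have hle := integral_mono ((((i1.add i2).add i3).add i4).add i5) iW (fun ω =>
    fW_lower hα₁ hα₂ a (fun i => (ω : E3) i) (H ω)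
      (by simpa [Fin.sum_univ_three] using sphere_sq_sum ω) (Real.sqrt_nonneg _) (hsq ω))
  refine le_trans ?_ hle
  have hs : ∫ ω : sphere (0 : E3) 1, 2 * ∑ i, a i * ∑ k, H ω i k * (ω : E3) k ∂sphMeas = 0 := by
    rw [integral_const_mul, integral_finsetSum _ fun i _ =>
      (sphere_integrable (f := fun y => a i * ∑ k, H y i k * y k) (by fun_prop))]
    simp_rw [integral_const_mul, hmean]
    simp
  rw [integral_add' (((i1.add i2).add i3).add i4) i5, integral_add' ((i1.add i2).add i3) i4,
    integral_add' (i1.add i2) i3, integral_add' i1 i2, hs, sphere_const, integral_const_mul,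
    integral_const_mul, integral_const_mul, sphere_linear_sq, ← pw1]
  have s3 : Real.sqrt 3 * (w0 / Real.sqrt 3 * w1) = w0 * w1 := by
    field_simp
  have hB := mul_le_mul_of_nonpos_left hcs (Bminus_01_nonpos hα₁ hα₂)
  have hB' := mul_le_mul_of_nonneg_left hB (show 0 ≤ 2 * Real.sqrt 3 by positivity)
  have e1 : 2 * Real.sqrt 3 * (Bminus α 0 1 * (w0 / Real.sqrt 3 * w1)) =
      2 * (Bminus α 0 1 * (w0 * w1)) := by rw [← s3]; ring
  rw [e1] at hB'
  have e2 : 3 * (Bminus α 0 0 - 1) * (4 * Real.pi / 3 * ∑ i, a i ^ 2) =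
      (Bminus α 0 0 - 1) * w0 ^ 2 := by rw [pw0]; ring
  rw [e2, ← pw0]
  linarith

end SphericalMean

/-! ### Conclusion -/

/-- For `-1 < α < 0`, the lower bound
`∫ (Lu)·(Φu) dx ≥ (1/2)|u(0)|² + c_α ∫₀^∞ r (wᵀ B₋ w) dr`, where
`w = (‖D_r ū‖_ω, ‖Dv‖_ω)`. -/
theorem lame_energy_lower_bound_Bminus
    (α : ℝ) (hα₁ : -1 < α) (hα₂ : α < 0)
    (u : E3 → Fin 3 → ℝ) (hu : IsTestOn Set.univ u)
    (ub : Fin 3 → ℝ → ℝ) (v : E3 → Fin 3 → ℝ)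
    (hdec : IsSphericalMeanDecomp u ub v)
    (w : ℝ → Fin 2 → ℝ)
    (hw0 : ∀ r, w r 0 = Real.sqrt (4 * Real.pi * ∑ i, (deriv (ub i) r) ^ 2))
    (hw1 : ∀ r, w r 1 =
      Real.sqrt (sphInt (fun x => ∑ i, ∑ k, (pd k (fun z => v z i) x) ^ 2) r)) :
    (1 / 2) * (∑ i, (u 0 i) ^ 2) +
        cA α * ∫ r in Set.Ioi (0 : ℝ), r * ∑ i, ∑ j, w r i * Bminus α i j * w r j ≤
      ∫ x : E3, ∑ i, ∑ j, lame α u x i * Phi α x i j * u x j := by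
  obtain ⟨hc, hs, -⟩ := hu
  rw [energy_identity hα₁ hc hs]
  have hcA : 0 ≤ cA α := by
    unfold cA
    have h1 : 0 < α + 1 := by linarith
    have h2 : 0 < α + 2 := by linarith
    positivity
  have hder : ∀ i r, deriv (ub i) r = meanD u i r := fun i r => (ub_hasDerivAt hc hdec i r).deriv
  have hw0' : ∀ r, w r 0 = Real.sqrt (4 * Real.pi * ∑ i, meanD u i r ^ 2) := fun r => by
    rw [hw0 r]; simp only [hder]
  have hw1' : ∀ r, 0 < r → w r 1 = Real.sqrt (devSq u r) := fun r hr => by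
    rw [hw1 r, sphInt, devSq]
    simp only [pd_v hc hdec _ _ hr]
  -- A continuous function agreeing with the integrand for `r > 0`; at `r ≤ 0` the formula for
  -- `Dv` used in `hw1'` is not available.
  let f : ℝ → ℝ := fun r =>
    r * (Real.sqrt (4 * Real.pi * ∑ i, meanD u i r ^ 2) * Bminus α 0 0
        * Real.sqrt (4 * Real.pi * ∑ i, meanD u i r ^ 2)
      + 2 * (Bminus α 0 1 * (Real.sqrt (4 * Real.pi * ∑ i, meanD u i r ^ 2)
        * Real.sqrt (devSq u r)))
      + Real.sqrt (devSq u r) * Bminus α 1 1 * Real.sqrt (devSq u r))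
  have hfe : ∀ r ∈ Set.Ioi (0 : ℝ), r * ∑ i, ∑ j, w r i * Bminus α i j * w r j = f r := by
    intro r hr
    simp only [Fin.sum_univ_two, hw0' r, hw1' r hr, f, Bminus_10, ← Bminus_01]
    ring
  obtain ⟨R, hR⟩ := exists_radius hs
  have cm := meanD_continuous hc
  have cd := devSq_continuous hc
  have cG := Gd_continuous hc
  have hfc : Continuous f := by fun_prop
  have hG0 : ∀ r, 0 ≤ r → R ≤ r → ∀ (ω : sphere (0 : E3) 1) i k,
      Gd u i k (r • (ω : E3)) = 0 := fun r h0 h ω i k =>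
    (Gd_zero (hR _ (by simp [norm_smul, abs_of_nonneg h0, h])) i k).eq_of_nhds
  have hm0 : ∀ r, 0 ≤ r → R ≤ r → ∀ i, meanD u i r = 0 := fun r h0 h i => by
    simp [meanD, sphJ, hG0 r h0 h]
  have hfi : IntegrableOn f (Set.Ioi 0) := integrableOn_Ioi_of_cont hfc (R := R) fun r h0 h => by
    simp [f, devSq, hm0 r h0 h, hG0 r h0 h]
  have hIc : Continuous fun p : E3 × E3 => psiI α u p.1 p.2 := by
    unfold psiI fW cofQ; fun_prop
  have hIi : IntegrableOn (sphJ (psiI α u)) (Set.Ioi 0) :=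
    integrableOn_Ioi_of_cont (sphJ_continuous hIc) (R := R) fun r h0 h =>
      sphJ_zero (R := R) (fun x y hx => by
        simp [psiI, fW, cofQ, fun i k => (Gd_zero (hR x hx) i k).eq_of_nhds]) h0 h
  rw [setIntegral_congr_fun measurableSet_Ioi hfe]
  refine add_le_add le_rfl (mul_le_mul_of_nonneg_left ?_ hcA)
  exact setIntegral_mono_on hfi hIi measurableSet_Ioi fun r hr =>
    radial_bound hα₁ hα₂ hc hr rfl rfl
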